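/- arXiv:2010.00478 — 3 statements merged into one kernel-verified Lean document; each statement's English description precedes it below -/
import Mathlib

section
/- Let m be a positive integer and let μ₁, …, μ_m be probability measures on the interval [0,1], each absolutely continuous with respect to the Lebesgue measure. Then there exist real numbers 0 = z₀ ≤ z₁ ≤ … ≤ z_m ≤ z_{m+1} = 1 and signs ε₁, …, ε_{m+1} ∈ {−1, +1} such that for every i = 1, …, m, the signed sum Σ_{k=1}^{m+1} ε_k · μ_i([z_{k−1}, z_k]) equals 0; equivalently, the union of the intervals with sign +1 and the union of the intervals with sign −1 each have μ_i-measure 1/2. -/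
section
open Module

theorem hr_odd_root (p : Polynomial ℝ) (hp : Odd p.natDegree) : ∃ x, p.IsRoot x := by
  induction h : p.natDegree using Nat.strong_induction_on generalizing p with
  | _ n ih =>
    subst h
    have hp0 : p ≠ 0 := by rintro rfl; simp at hp
    have hu : ¬ IsUnit p := by
      intro hu; rw [Polynomial.natDegree_eq_zero_of_isUnit hu] at hp; simp at hp
    obtain ⟨q, hq, r, rfl⟩ := WfDvdMonoid.exists_irreducible_factor hu hp0
    have hq2 := hq.natDegree_le_two
    have hq1 := hq.natDegree_pos
    have hr0 : r ≠ 0 := right_ne_zero_of_mul hp0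
    rw [Polynomial.natDegree_mul hq.ne_zero hr0] at hp
    by_cases h1 : q.natDegree = 1
    · obtain ⟨x, hx⟩ := Polynomial.exists_root_of_degree_eq_one
        ((Polynomial.degree_eq_iff_natDegree_eq hq.ne_zero).2 h1)
      exact ⟨x, by simp [Polynomial.IsRoot] at *; simp [hx]⟩
    · have h2 : q.natDegree = 2 := by omega
      obtain ⟨x, hx⟩ := ih r.natDegree (by rw [Polynomial.natDegree_mul hq.ne_zero hr0]; omega) r
        (by rw [h2] at hp; revert hp; grind) rfl
      exact ⟨x, by simp [Polynomial.IsRoot] at *; simp [hx]⟩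

theorem hr_common_eig {V J : Type*} [AddCommGroup V] [Module ℝ V] (T : J → V →ₗ[ℝ] V)
    (hc : ∀ a b v, T a (T b v) = T b (T a v)) (N : ℕ) (U : Submodule ℝ V)
    (hU : ∀ a, ∀ v ∈ U, T a v ∈ U) (hN : finrank ℝ U = N) (ho : Odd N) :
    ∃ v ∈ U, v ≠ 0 ∧ ∀ a, ∃ c : ℝ, T a v = c • v := by
  induction N using Nat.strong_induction_on generalizing U with
  | _ N ih =>
    have hpos : 0 < finrank ℝ U := by rw [hN]; exact ho.pos
    have : FiniteDimensional ℝ U := FiniteDimensional.of_finrank_pos hpos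
    by_cases hs : ∀ a, ∃ c : ℝ, ∀ v ∈ U, T a v = c • v
    · have := Module.nontrivial_of_finrank_pos hpos
      obtain ⟨v, hv⟩ := exists_ne (0 : U)
      exact ⟨v, v.2, by simpa using hv, fun a => ⟨(hs a).choose, (hs a).choose_spec v v.2⟩⟩
    · push Not at hs
      obtain ⟨a, ha⟩ := hs
      let R : End ℝ U := (T a).restrict (hU a)
      obtain ⟨l, hl⟩ := hr_odd_root R.charpoly (by rw [LinearMap.charpoly_natDegree, hN]; exact ho)
      have hev := (Module.End.hasEigenvalue_iff_isRoot_charpoly R l).2 hl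
      obtain ⟨u, hu⟩ := hev.exists_hasEigenvector
      let S : V →ₗ[ℝ] V := T a - l • LinearMap.id
      have hSU : ∀ v ∈ U, S v ∈ U := fun v hv =>
        U.sub_mem (hU a v hv) (U.smul_mem l hv)
      have hST : ∀ b v, T b (S v) = S (T b v) := by
        intro b v; simp [S, hc a b]
      have hrn := LinearMap.finrank_range_add_finrank_ker (S.domRestrict U)
      have hU1 : finrank ℝ ((LinearMap.ker (S.domRestrict U)).map U.subtype) =
        finrank ℝ (LinearMap.ker (S.domRestrict U)) := by
        exact Submodule.finrank_map_subtype_eq U _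
      have hkpos : 0 < finrank ℝ (LinearMap.ker (S.domRestrict U)) := by
        rw [Module.finrank_pos_iff_exists_ne_zero]
        refine ⟨⟨u, ?_⟩, ?_⟩
        · have := hu.apply_eq_smul
          have := congrArg Subtype.val this
          simp [S, R] at this ⊢
          rw [this, sub_self]
        · intro h; exact hu.2 (congrArg Subtype.val h)
      have hrpos : 0 < finrank ℝ (LinearMap.range (S.domRestrict U)) := by
        rw [Module.finrank_pos_iff_exists_ne_zero]
        obtain ⟨v, hv, hv'⟩ := ha l
        refine ⟨⟨S v, ⟨⟨v, hv⟩, rfl⟩⟩, ?_⟩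
        intro h; have := congrArg Subtype.val h
        simp [S, sub_eq_zero] at this
        exact hv' this
      rw [hN] at hrn
      rcases Nat.even_or_odd (finrank ℝ (LinearMap.range (S.domRestrict U))) with he | he
      · obtain ⟨v, hv, h⟩ := ih (finrank ℝ (LinearMap.ker (S.domRestrict U))) (by omega)
          ((LinearMap.ker (S.domRestrict U)).map U.subtype) (by
            rintro b v ⟨w, hw, rfl⟩
            refine ⟨⟨T b w, hU b _ w.2⟩, ?_, rfl⟩
            have hw' : S w = 0 := hw
            show S (T b w) = 0
            rw [← hST, hw', map_zero]) hU1 (by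
              rw [← hrn] at ho
              rcases Nat.even_or_odd (finrank ℝ (LinearMap.ker (S.domRestrict U))) with h | h
              · exact absurd ho (Nat.not_odd_iff_even.2 (he.add h))
              · exact h)
        obtain ⟨w, hw, rfl⟩ := hv
        exact ⟨_, w.2, h⟩
      · obtain ⟨v, hv, h⟩ := ih _ (by omega)
          (LinearMap.range (S.domRestrict U)) (by
            rintro b v ⟨w, rfl⟩
            refine ⟨⟨T b w, hU b _ w.2⟩, ?_⟩
            exact (hST b w).symm) rfl he
        obtain ⟨w, rfl⟩ := hv
        exact ⟨_, hSU _ w.2, h⟩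
open MvPolynomial in
/-- The antipodal substitution. -/
noncomputable def hrSg (ι : Type) : MvPolynomial ι ℝ →ₐ[ℝ] MvPolynomial ι ℝ :=
  aeval (fun i => -X i)

open MvPolynomial in
theorem hrSg_monomial {ι : Type} (α : ι →₀ ℕ) :
    hrSg ι (monomial α 1) = (-1 : ℝ) ^ (α.degree) • monomial α (1 : ℝ) := by
  rw [hrSg, aeval_monomial, monomial_eq, Finsupp.prod, Finsupp.prod]
  simp only [neg_pow (X _ : MvPolynomial ι ℝ)]
  rw [Finset.prod_mul_distrib, Finset.prod_pow_eq_pow_sum, Finsupp.degree_apply]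
  simp [smul_eq_C_mul]

section
open MvPolynomial
variable {ι : Type} (e w : ι → ℕ) (f g : ι → MvPolynomial ι ℝ)

noncomputable def hrB (α : ι →₀ ℕ) : MvPolynomial ι ℝ :=
  open Classical in
  if h : ∃ i, e i ≤ α i then
    f h.choose * monomial (α - Finsupp.single h.choose (e h.choose)) 1
  else monomial α 1

/-- Polynomials of small weight. -/
noncomputable def hrLow (d : ℕ) : Submodule ℝ (MvPolynomial ι ℝ) :=
  Submodule.span ℝ ((fun β => monomial β (1 : ℝ)) '' {β | Finsupp.weight w β < d})

theorem hrLow_coeff (d : ℕ) (p : MvPolynomial ι ℝ) (hp : p ∈ hrLow w d) (β : ι →₀ ℕ)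
    (hβ : d ≤ Finsupp.weight w β) : coeff β p = 0 := by
  classical
  unfold hrLow at hp
  induction hp using Submodule.span_induction with
  | mem x hx =>
    obtain ⟨γ, hγ, rfl⟩ := hx
    simp only [Set.mem_ofPred_eq] at hγ
    rw [coeff_monomial, if_neg]
    rintro rfl; omega
  | zero => simp
  | add x y _ _ h1 h2 => simp [h1, h2]
  | smul a x _ h => simp [h]

theorem hr_gmul (hg : ∀ i, ∀ β ∈ (g i).support, Finsupp.weight w β < e i * w i) (i : ι)
    (γ : ι →₀ ℕ) : g i * monomial γ 1 ∈ hrLow w (e i * w i + Finsupp.weight w γ) := by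
  rw [(g i).as_sum, Finset.sum_mul]
  refine Submodule.sum_mem _ fun β hβ => ?_
  have : monomial β (coeff β (g i)) * monomial γ (1 : ℝ) =
    coeff β (g i) • monomial (β + γ) (1 : ℝ) := by
    simp [monomial_mul, smul_monomial]
  rw [this]
  refine Submodule.smul_mem _ _ (Submodule.subset_span ⟨_, ?_, rfl⟩)
  simp only [Set.mem_ofPred_eq, map_add]
  have := hg i β hβ
  omega

theorem hr_split {i : ι} {n : ℕ} {α : ι →₀ ℕ} (h : n ≤ α i) :
    Finsupp.single i n + (α - Finsupp.single i n) = α := by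
  classical
  apply add_tsub_cancel_of_le
  simpa using h

theorem hrB_sub (hf : ∀ i, f i = X i ^ e i + g i)
    (hg : ∀ i, ∀ β ∈ (g i).support, Finsupp.weight w β < e i * w i) (α : ι →₀ ℕ) :
    hrB e f α - monomial α 1 ∈ hrLow w (Finsupp.weight w α) := by
  unfold hrB
  split_ifs with h
  · have h1 := hr_split h.choose_spec
    set i := h.choose
    set γ := α - Finsupp.single i (e i)
    have : f i * monomial γ 1 - monomial α 1 = g i * monomial γ 1 := by
      rw [hf, ← h1, X_pow_eq_monomial, add_mul, monomial_mul]; simp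
    rw [this]
    have h2 := hr_gmul e w g hg i γ
    rw [← h1, map_add, Finsupp.weight_single]
    simpa using h2
  · simp

noncomputable def hrL : MvPolynomial ι ℝ →ₗ[ℝ] MvPolynomial ι ℝ :=
  (basisMonomials ι ℝ).constr ℝ (hrB e f)

theorem hrL_monomial (α : ι →₀ ℕ) : hrL e f (monomial α 1) = hrB e f α := by
  have := (basisMonomials ι ℝ).constr_basis ℝ (hrB e f) α
  simpa [hrL] using this

theorem hrL_surj (hf : ∀ i, f i = X i ^ e i + g i)
    (hg : ∀ i, ∀ β ∈ (g i).support, Finsupp.weight w β < e i * w i) :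
    Function.Surjective (hrL e f) := by
  have key : ∀ d, hrLow w d ≤ LinearMap.range (hrL e f) := by
    intro d
    induction d with
    | zero => exact Submodule.span_le.2 (by rintro _ ⟨β, hβ, rfl⟩; simp at hβ)
    | succ d ih =>
      refine Submodule.span_le.2 ?_
      rintro _ ⟨β, hβ, rfl⟩
      simp only [Set.mem_ofPred_eq] at hβ
      have h1 := hrB_sub e w f g hf hg β
      have h2 : hrB e f β - monomial β 1 ∈ LinearMap.range (hrL e f) := by
        apply ih
        refine Submodule.span_mono (Set.image_mono ?_) h1
        intro γ hγ
        simp only [Set.mem_ofPred_eq] at *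
        omega
      have h3 : hrB e f β ∈ LinearMap.range (hrL e f) := ⟨_, hrL_monomial e f β⟩
      have := Submodule.sub_mem _ h3 h2
      simpa using this
  rw [← LinearMap.range_eq_top, eq_top_iff]
  intro p _
  rw [p.as_sum]
  refine Submodule.sum_mem _ fun β _ => ?_
  have : monomial β (coeff β p) = coeff β p • monomial β (1 : ℝ) := by simp [smul_monomial]
  rw [this]
  exact Submodule.smul_mem _ _ (key (Finsupp.weight w β + 1)
    (Submodule.subset_span ⟨β, by simp, rfl⟩))

theorem hrL_inj (hf : ∀ i, f i = X i ^ e i + g i)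
    (hg : ∀ i, ∀ β ∈ (g i).support, Finsupp.weight w β < e i * w i) :
    Function.Injective (hrL e f) := by
  classical
  rw [injective_iff_map_eq_zero]
  intro p hp
  by_contra hne
  obtain ⟨α, hα, hmax⟩ := p.support.exists_max_image (Finsupp.weight w)
    (by simpa using hne)
  have h1 : hrL e f p = ∑ β ∈ p.support, coeff β p • hrB e f β := by
    conv_lhs => rw [p.as_sum]
    rw [map_sum]
    refine Finset.sum_congr rfl fun β _ => ?_
    rw [← hrL_monomial, ← map_smul, smul_monomial, smul_eq_mul, mul_one]
  have h2 : ∀ β ∈ p.support, coeff α (coeff β p • hrB e f β) =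
      if β = α then coeff α p else 0 := by
    intro β hβ
    have h3 := hrLow_coeff w _ _ (hrB_sub e w f g hf hg β) α (hmax β hβ)
    rw [coeff_sub, coeff_monomial, sub_eq_zero] at h3
    rw [coeff_smul, h3]
    split_ifs with h
    · simp [h]
    · simp
  have h4 := congrArg (coeff α) h1
  rw [coeff_sum, Finset.sum_congr rfl h2, hp] at h4
  simp at h4
  simp at hα
  exact hα (h4 hα).symm

theorem hr_kill (hf : ∀ i, f i = X i ^ e i + g i)
    (hg : ∀ i, ∀ β ∈ (g i).support, Finsupp.weight w β < e i * w i)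
    (φ : MvPolynomial ι ℝ →ₗ[ℝ] ℝ) (hφ : ∀ α, (∃ i, e i ≤ α i) → φ (hrB e f α) = 0) :
    ∀ i p, φ (f i * p) = 0 := by
  classical
  have key : ∀ N i β, Finsupp.weight w β + e i * w i < N → φ (f i * monomial β 1) = 0 := by
    intro N
    induction N with
    | zero => intro i β h; omega
    | succ N ih =>
      intro i β hN
      have low : ∀ j d p, p ∈ hrLow w d → d + e j * w j ≤ N → φ (f j * p) = 0 := by
        intro j d p hp hd
        unfold hrLow at hp
        induction hp using Submodule.span_induction with
        | mem x hx =>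
          obtain ⟨γ, hγ, rfl⟩ := hx
          simp only [Set.mem_ofPred_eq] at hγ
          exact ih j γ (by omega)
        | zero => simp
        | add x y _ _ h1 h2 => simp [mul_add, h1, h2]
        | smul a x _ h => simp [h]
      set α := Finsupp.single i (e i) + β with hα
      have hex : ∃ i, e i ≤ α i := ⟨i, by simp [hα]⟩
      have h0 := hφ α hex
      rw [hrB, dif_pos hex] at h0
      have hj := hex.choose_spec
      set j := hex.choose
      by_cases hij : j = i
      · rw [hij] at h0
        simpa [hα] using h0
      · have hjβ : e j ≤ β j := by
          simpa [hα, Finsupp.single_apply, Ne.symm hij] using hj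
        have h1 := hr_split hjβ
        set β' := β - Finsupp.single j (e j)
        have h2 : α - Finsupp.single j (e j) = Finsupp.single i (e i) + β' := by
          rw [hα, ← h1, add_left_comm]; simp
        rw [h2] at h0
        have h3 : f i * monomial β 1 = f j * monomial (Finsupp.single i (e i) + β') 1
            + f j * (g i * monomial β' 1) - f i * (g j * monomial β' 1) := by
          rw [← h1]
          have ej : (monomial (Finsupp.single j (e j) + β') (1 : ℝ)) =
            X j ^ e j * monomial β' 1 := by rw [X_pow_eq_monomial, monomial_mul, one_mul]
          have ei : (monomial (Finsupp.single i (e i) + β') (1 : ℝ)) =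
            X i ^ e i * monomial β' 1 := by rw [X_pow_eq_monomial, monomial_mul, one_mul]
          rw [ei, ej, hf i, hf j]; ring
        have hw : Finsupp.weight w β = e j * w j + Finsupp.weight w β' := by
          rw [← h1, map_add, Finsupp.weight_single]; simp
        rw [h3, map_sub, map_add, h0,
          low j _ _ (hr_gmul e w g hg i β') (by omega),
          low i _ _ (hr_gmul e w g hg j β') (by omega)]
        simp
  intro i p
  rw [p.as_sum, Finset.mul_sum, map_sum]
  refine Finset.sum_eq_zero fun β _ => ?_
  have : monomial β (coeff β p) = coeff β p • monomial β (1 : ℝ) := by simp [smul_monomial]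
  rw [this, mul_smul_comm, map_smul, key _ i β (Nat.lt_succ_self _), smul_zero]

/-- Even functionals killing the ideal. -/
noncomputable def hrK : Submodule ℝ (MvPolynomial ι ℝ →ₗ[ℝ] ℝ) where
  carrier := {φ | (∀ p, φ (hrSg ι p) = φ p) ∧ ∀ i p, φ (f i * p) = 0}
  add_mem' := by
    rintro a b ⟨h1, h2⟩ ⟨h3, h4⟩
    exact ⟨fun p => by simp [h1, h3], fun i p => by simp [h2, h4]⟩
  zero_mem' := by simp
  smul_mem' := by
    rintro c a ⟨h1, h2⟩
    exact ⟨fun p => by simp [h1], fun i p => by simp [h2]⟩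

theorem hrL_sg (hs : ∀ i, hrSg ι (f i) = (-1 : ℝ) ^ e i • f i) (p : MvPolynomial ι ℝ) :
    hrL e f (hrSg ι p) = hrSg ι (hrL e f p) := by
  have : (hrL e f) ∘ₗ (hrSg ι).toLinearMap = (hrSg ι).toLinearMap ∘ₗ (hrL e f) := by
    refine (basisMonomials ι ℝ).ext fun α => ?_
    simp only [coe_basisMonomials, LinearMap.comp_apply, AlgHom.toLinearMap_apply, hrL_monomial,
      hrSg_monomial, map_smul]
    unfold hrB
    split_ifs with h
    · have h1 := hr_split h.choose_spec
      rw [map_mul, hs, hrSg_monomial, smul_mul_smul_comm, ← pow_add]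
      have hd := congrArg Finsupp.degree h1
      rw [map_add, Finsupp.degree_single] at hd
      rw [hd]
    · rw [hrSg_monomial]
  exact LinearMap.congr_fun this p

theorem hrK_finrank [Fintype ι] (hf : ∀ i, f i = X i ^ e i + g i)
    (hg : ∀ i, ∀ β ∈ (g i).support, Finsupp.weight w β < e i * w i)
    (hs : ∀ i, hrSg ι (f i) = (-1 : ℝ) ^ e i • f i) :
    finrank ℝ (hrK f) = Nat.card {α : ι →₀ ℕ // (∀ i, α i < e i) ∧ Even α.degree} := by
  classical
  set B := {α : ι →₀ ℕ // (∀ i, α i < e i) ∧ Even α.degree}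
  have hfin : Finite B := by
    refine Finite.of_injective (β := (i : ι) → Fin (e i)) (fun α i => ⟨α.1 i, α.2.1 i⟩) ?_
    intro a b h
    apply Subtype.ext
    ext i
    simpa using congrArg Fin.val (congrFun h i)
  have := Fintype.ofFinite B
  let Φ : hrK f →ₗ[ℝ] (B → ℝ) :=
    { toFun := fun φ α => φ.1 (monomial α.1 1)
      map_add' := fun _ _ => rfl
      map_smul' := fun _ _ => rfl }
  have hbox : ∀ α : ι →₀ ℕ, (¬ ∃ i, e i ≤ α i) → hrB e f α = monomial α 1 := by
    intro α h; rw [hrB, dif_neg h]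
  have hinj : Function.Injective Φ := by
    rw [injective_iff_map_eq_zero]
    rintro ⟨φ, h1, h2⟩ h0
    have hz : φ ∘ₗ hrL e f = 0 := by
      refine (basisMonomials ι ℝ).ext fun α => ?_
      simp only [coe_basisMonomials, LinearMap.comp_apply, hrL_monomial, LinearMap.zero_apply]
      by_cases h : ∃ i, e i ≤ α i
      · rw [hrB, dif_pos h, h2]
      · rw [hbox α h]
        rcases Nat.even_or_odd α.degree with he | he
        · exact congrFun h0 ⟨α, by push Not at h; exact h, he⟩
        · have := h1 (monomial α 1)
          rw [hrSg_monomial, he.neg_one_pow, map_smul] at this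
          simp at this
          linarith
    apply Subtype.ext
    apply LinearMap.ext
    intro p
    obtain ⟨q, rfl⟩ := hrL_surj e w f g hf hg p
    exact LinearMap.congr_fun hz q
  have hsurj : Function.Surjective Φ := by
    intro c
    let Le := LinearEquiv.ofBijective (hrL e f) ⟨hrL_inj e w f g hf hg, hrL_surj e w f g hf hg⟩
    let ψ : MvPolynomial ι ℝ →ₗ[ℝ] ℝ := (basisMonomials ι ℝ).constr ℝ
      (fun α => if h : (∀ i, α i < e i) ∧ Even α.degree then c ⟨α, h⟩ else 0)
    have hψ : ∀ α, ψ (monomial α 1) =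
        if h : (∀ i, α i < e i) ∧ Even α.degree then c ⟨α, h⟩ else 0 := by
      intro α
      have := (basisMonomials ι ℝ).constr_basis ℝ
        (fun α => if h : (∀ i, α i < e i) ∧ Even α.degree then c ⟨α, h⟩ else 0) α
      simpa [ψ] using this
    let φ : MvPolynomial ι ℝ →ₗ[ℝ] ℝ := ψ ∘ₗ Le.symm.toLinearMap
    have hφ : ∀ q, φ (hrL e f q) = ψ q := by
      intro q
      show ψ (Le.symm (Le q)) = ψ q
      simp
    have hψs : ∀ q, ψ (hrSg ι q) = ψ q := by
      have : ψ ∘ₗ (hrSg ι).toLinearMap = ψ := by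
        refine (basisMonomials ι ℝ).ext fun α => ?_
        simp only [coe_basisMonomials, LinearMap.comp_apply, AlgHom.toLinearMap_apply,
          hrSg_monomial, map_smul, hψ]
        split_ifs with h
        · simp [h.2.neg_one_pow]
        · simp
      exact fun q => LinearMap.congr_fun this q
    refine ⟨⟨φ, ?_, ?_⟩, ?_⟩
    · intro p
      obtain ⟨q, rfl⟩ := hrL_surj e w f g hf hg p
      rw [← hrL_sg e f hs, hφ, hφ, hψs]
    · apply hr_kill e w f g hf hg
      intro α hα
      rw [← hrL_monomial, hφ, hψ, dif_neg]
      rintro ⟨h, -⟩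
      obtain ⟨i, hi⟩ := hα
      exact absurd (h i) (by omega)
    · funext α
      show φ (monomial α.1 1) = c α
      rw [← hbox α.1 (by push Not; exact α.2.1), ← hrL_monomial, hφ, hψ, dif_pos α.2]
  rw [(LinearEquiv.ofBijective Φ ⟨hinj, hsurj⟩).finrank_eq, Module.finrank_fintype_fun_eq_card,
    Nat.card_eq_fintype_card]

end

open MvPolynomial in
theorem hr_poly_exact (n D : ℕ) (hD : Odd D) (g : Fin n → MvPolynomial (Fin (n+1)) ℝ)
    (hodd : ∀ i, hrSg _ (g i) = - g i)
    (hdeg : ∀ i, ∀ β ∈ (g i).support,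
      Finsupp.weight (Fin.cons 2 (fun _ => 1) : Fin (n+1) → ℕ) β < D) :
    ∃ x : Fin (n+1) → ℝ, ∑ i, x i ^ 2 = 1 ∧ ∀ i, x i.succ ^ D + eval x (g i) = 0 := by
  classical
  let e : Fin (n+1) → ℕ := Fin.cons 2 (fun _ => D)
  let w : Fin (n+1) → ℕ := Fin.cons 2 (fun _ => 1)
  let G : Fin (n+1) → MvPolynomial (Fin (n+1)) ℝ :=
    Fin.cons (∑ i : Fin n, X i.succ ^ 2 - 1) g
  let f : Fin (n+1) → MvPolynomial (Fin (n+1)) ℝ := fun i => X i ^ e i + G i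
  have hX : ∀ i, hrSg (Fin (n+1)) (X i) = - X i := by intro i; simp [hrSg]
  have hg : ∀ i, ∀ β ∈ (G i).support, Finsupp.weight w β < e i * w i := by
    intro i
    refine Fin.cases ?_ ?_ i
    · intro β hβ
      simp only [G, Fin.cons_zero, MvPolynomial.mem_support_iff] at hβ
      by_contra hlt
      simp only [e, w, Fin.cons_zero] at hlt
      apply hβ
      rw [coeff_sub, coeff_sum, coeff_one, if_neg, sub_zero]
      · refine Finset.sum_eq_zero fun j _ => ?_
        rw [coeff_X_pow, if_neg]
        rintro rfl
        simp [Finsupp.weight_single] at hlt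
      · rintro rfl
        simp at hlt
    · intro j β hβ
      simpa [e, w] using hdeg j β (by simpa [G] using hβ)
  have hs : ∀ i, hrSg _ (f i) = (-1 : ℝ) ^ e i • f i := by
    intro i
    refine Fin.cases ?_ ?_ i
    · simp [f, e, G, hX]
    · intro j
      simp only [f, e, G, Fin.cons_succ, map_add, map_pow, hX, hodd, hD.neg_pow, one_pow]
      simp
      try ring
  have hrank := hrK_finrank e w f G (fun i => rfl) hg hs
  have hcard : Nat.card {α : Fin (n+1) →₀ ℕ // (∀ i, α i < e i) ∧ Even α.degree} = D ^ n := by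
    have h1 : ∀ α : {α : Fin (n+1) →₀ ℕ // (∀ i, α i < e i) ∧ Even α.degree},
        ∀ i : Fin n, α.1 i.succ < D := fun α i => by simpa [e] using α.2.1 i.succ
    have h2 : Function.Bijective (fun (α : {α : Fin (n+1) →₀ ℕ //
        (∀ i, α i < e i) ∧ Even α.degree}) (i : Fin n) => (⟨α.1 i.succ, h1 α i⟩ : Fin D)) := by
      constructor
      · rintro ⟨a, ha1, ha2⟩ ⟨b, hb1, hb2⟩ h
        have h3 : ∀ i : Fin n, a i.succ = b i.succ := fun i => by
          simpa using congrArg Fin.val (congrFun h i)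
        apply Subtype.ext
        show a = b
        ext i
        refine Fin.cases ?_ h3 i
        rw [Finsupp.degree_eq_sum, Fin.sum_univ_succ] at ha2 hb2
        simp only [h3] at ha2
        have ha := ha1 0
        have hb := hb1 0
        simp only [e, Fin.cons_zero] at ha hb
        grind
      · intro v
        refine ⟨⟨Finsupp.equivFunOnFinite.symm
          (Fin.cons ((∑ i, (v i : ℕ)) % 2) (fun i => (v i : ℕ))), ?_, ?_⟩, ?_⟩
        · intro i
          refine Fin.cases ?_ ?_ i
          · simpa [e] using Nat.mod_lt _ two_pos
          · intro j; simp [e]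
        · rw [Finsupp.degree_eq_sum, Fin.sum_univ_succ]
          simp only [Finsupp.equivFunOnFinite_symm_apply_apply, Fin.cons_zero, Fin.cons_succ]
          grind
        · funext i; simp
    rw [Nat.card_congr (Equiv.ofBijective _ h2)]
    simp
  let T : Fin (n+1) × Fin (n+1) → (MvPolynomial (Fin (n+1)) ℝ →ₗ[ℝ] ℝ) →ₗ[ℝ]
      (MvPolynomial (Fin (n+1)) ℝ →ₗ[ℝ] ℝ) := fun ij =>
    { toFun := fun φ => φ ∘ₗ LinearMap.mulLeft ℝ (X ij.1 * X ij.2)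
      map_add' := fun _ _ => rfl
      map_smul' := fun _ _ => rfl }
  have hT : ∀ i j φ p, T (i, j) φ p = φ (X i * X j * p) := fun i j φ p => rfl
  obtain ⟨φ, ⟨hφs, hφf⟩, hφ0, hφT⟩ := hr_common_eig T
    (by
      rintro ⟨a, b⟩ ⟨c, d⟩ φ
      apply LinearMap.ext
      intro p
      simp only [hT]
      congr 1; ring) (D ^ n) (hrK f)
    (by
      rintro ⟨a, b⟩ φ ⟨h1, h2⟩
      refine ⟨fun p => ?_, fun i p => ?_⟩
      · rw [hT, hT, ← h1 (X a * X b * p)]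
        simp only [map_mul, hX, neg_mul_neg]
      · rw [hT, ← h2 i (X a * X b * p)]
        congr 1; ring) (hrank.trans hcard) (hD.pow)
  choose c0 hc0 using hφT
  have hc : ∀ i j p, φ (X i * X j * p) = c0 (i, j) * φ p := fun i j p => by
    rw [← hT, hc0]; rfl
  clear hc0 hT
  obtain ⟨p0, hp0⟩ : ∃ p, φ p ≠ 0 := by
    by_contra h; push Not at h; exact hφ0 (LinearMap.ext h)
  have hsum : ∑ i, c0 (i, i) = 1 := by
    have h1 := hφf 0 p0
    have h2 : f 0 * p0 = ∑ i, X i * X i * p0 - p0 := by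
      simp only [f, e, G, Fin.cons_zero]
      rw [Fin.sum_univ_succ, ← Finset.sum_mul]
      simp only [← pow_two]; ring
    rw [h2, map_sub, map_sum] at h1
    simp only [hc] at h1
    rw [← Finset.sum_mul] at h1
    have : (∑ i, c0 (i, i) - 1) * φ p0 = 0 := by linarith
    rcases mul_eq_zero.1 this with h | h
    · linarith
    · exact absurd h hp0
  obtain ⟨k, hk⟩ : ∃ k, 0 < c0 (k, k) := by
    by_contra h; push Not at h
    have := Finset.sum_nonpos (s := Finset.univ) (fun i _ => h i)
    rw [hsum] at this; linarith
  have hrel : ∀ i j, c0 (i, k) * c0 (j, k) = c0 (i, j) * c0 (k, k) := by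
    intro i j
    have h1 : φ (X i * X k * (X j * X k * p0)) = φ (X i * X j * (X k * X k * p0)) := by
      congr 1; ring
    simp only [hc] at h1
    have : (c0 (i, k) * c0 (j, k) - c0 (i, j) * c0 (k, k)) * φ p0 = 0 := by linarith
    rcases mul_eq_zero.1 this with h | h
    · linarith
    · exact absurd h hp0
  set s := Real.sqrt (c0 (k, k)) with hsdef
  have hs0 : 0 < s := Real.sqrt_pos.2 hk
  have hss : s * s = c0 (k, k) := Real.mul_self_sqrt hk.le
  let x : Fin (n+1) → ℝ := fun i => c0 (i, k) / s
  have hx : ∀ i j, x i * x j = c0 (i, j) := by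
    intro i j
    simp only [x]
    rw [div_mul_div_comm, hrel, hss, mul_div_cancel_right₀ _ hk.ne']
  have hxk : x k = s := by
    simp only [x]; rw [← hss]; field_simp
  have hX1 : ∀ i p, φ (X i * p) = x i / s * φ (X k * p) := by
    intro i p
    have h1 := hc k k (X i * p)
    have h2 : φ (X k * X k * (X i * p)) = φ (X i * X k * (X k * p)) := by congr 1; ring
    rw [h2, hc, ← hx, ← hx, hxk] at h1
    field_simp
    have : s * (x i * φ (X k * p)) = s * (s * φ (X i * p)) := by linarith
    have := mul_left_cancel₀ hs0.ne' this
    linarith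
  have hτ : ∀ p, φ p + φ (X k * p) / s = φ 1 * eval x p := by
    have hk1 : φ (X k) = 0 := by
      have := hφs (X k)
      rw [hX, map_neg] at this; linarith
    intro p
    induction p using MvPolynomial.induction_on with
    | C a =>
      have : (C a : MvPolynomial (Fin (n+1)) ℝ) = a • 1 := by simp [smul_eq_C_mul]
      rw [this, mul_smul_comm, mul_one]; simp [hk1, mul_comm]
    | add p q hp hq =>
      rw [mul_add, map_add, map_add, map_add, mul_add, ← hp, ← hq]; ring
    | mul_X p i hp =>
      have h1 : φ (X k * (p * X i)) = x i * s * φ p := by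
        rw [← hxk, hx, ← hc]; congr 1; ring
      rw [h1, mul_comm p, hX1, map_mul (eval x), eval_X]
      rw [show φ 1 * (x i * eval x p) = x i * (φ 1 * eval x p) by ring, ← hp]
      field_simp; ring
  have h1ne : φ 1 ≠ 0 := by
    intro h
    apply hp0
    have e1 := hτ p0
    have e2 := hτ (hrSg _ p0)
    have e3 : φ (X k * hrSg _ p0) = - φ (X k * p0) := by
      rw [← hφs (X k * p0), map_mul (hrSg _), hX, neg_mul, map_neg, neg_neg]
    rw [hφs, e3] at e2
    rw [h] at e1 e2
    rw [neg_div] at e2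
    linarith
  refine ⟨x, ?_, fun i => ?_⟩
  · rw [← hsum]; refine Finset.sum_congr rfl fun i _ => ?_
    rw [pow_two, hx]
  · have h1 := hτ (f i.succ)
    have h2 := hφf i.succ 1
    have h3 := hφf i.succ (X k)
    rw [mul_one] at h2
    rw [mul_comm] at h3
    rw [h2, h3] at h1
    have h4 : eval x (f i.succ) = 0 := by
      have h5 : φ 1 * eval x (f i.succ) = 0 := by rw [← h1]; simp
      exact (mul_eq_zero.1 h5).resolve_left h1ne
    simpa [f, e, G] using h4

open MvPolynomial in
theorem hr_poly (n : ℕ) (g : Fin n → MvPolynomial (Fin (n+1)) ℝ)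
    (hodd : ∀ i, hrSg _ (g i) = - g i) (δ : ℝ) (hδ : 0 < δ) :
    ∃ x : Fin (n+1) → ℝ, ∑ i, x i ^ 2 = 1 ∧ ∀ i, |eval x (g i)| ≤ δ := by
  let w : Fin (n+1) → ℕ := Fin.cons 2 (fun _ => 1)
  let D := 2 * (∑ i, ∑ β ∈ (g i).support, Finsupp.weight w β) + 1
  obtain ⟨x, hx, h⟩ := hr_poly_exact n D ⟨_, rfl⟩ (fun i => δ⁻¹ • g i)
    (fun i => by rw [map_smul, hodd, smul_neg]) (fun i β hβ => by
      have hβ' : β ∈ (g i).support := support_smul hβ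
      have h1 : Finsupp.weight w β ≤ ∑ β ∈ (g i).support, Finsupp.weight w β :=
        Finset.single_le_sum (f := fun β => Finsupp.weight w β) (fun _ _ => Nat.zero_le _) hβ'
      have h2 : ∑ β ∈ (g i).support, Finsupp.weight w β ≤
          ∑ i, ∑ β ∈ (g i).support, Finsupp.weight w β :=
        Finset.single_le_sum (f := fun i => ∑ β ∈ (g i).support, Finsupp.weight w β)
          (fun _ _ => Nat.zero_le _) (Finset.mem_univ i)
      show Finsupp.weight w β < D
      omega)
  refine ⟨x, hx, fun i => ?_⟩
  have h1 := h i
  rw [smul_eval] at h1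
  have h2 : eval x (g i) = - (δ * x i.succ ^ D) := by
    field_simp at h1
    linarith
  have h3 : |x i.succ| ≤ 1 := by
    rw [← sq_le_one_iff_abs_le_one, ← hx]
    exact Finset.single_le_sum (f := fun i => x i ^ 2) (fun i _ => sq_nonneg _) (Finset.mem_univ _)
  rw [h2, abs_neg, abs_mul, abs_pow, abs_of_pos hδ]
  exact mul_le_of_le_one_right hδ.le (pow_le_one₀ (abs_nonneg _) h3)

theorem hr_borsuk_ulam (n : ℕ) (F : Fin n → (Fin (n+1) → ℝ) → ℝ) (hF : ∀ i, Continuous (F i))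
    (hodd : ∀ i x, F i (-x) = - F i x) :
    ∃ x : Fin (n+1) → ℝ, ∑ i, x i ^ 2 = 1 ∧ ∀ i, F i x = 0 := by
  classical
  let K : Set (Fin (n+1) → ℝ) := {x | ∑ i, x i ^ 2 = 1}
  have hKneg : ∀ x ∈ K, -x ∈ K := by
    intro x hx
    have hx' : ∑ i, x i ^ 2 = 1 := hx
    show ∑ i, (-x) i ^ 2 = 1
    simpa using hx'
  have hKc : IsCompact K := by
    refine Metric.isCompact_of_isClosed_isBounded ?_ ?_
    · exact isClosed_eq (by fun_prop) continuous_const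
    · refine (Metric.isBounded_Icc (-1 : Fin (n+1) → ℝ) 1).subset ?_
      intro x hx
      have hx' : ∑ i, x i ^ 2 = 1 := hx
      have h3 : ∀ i, |x i| ≤ 1 := fun i => by
        rw [← sq_le_one_iff_abs_le_one, ← hx']
        exact Finset.single_le_sum (f := fun i => x i ^ 2) (fun i _ => sq_nonneg _)
          (Finset.mem_univ _)
      exact ⟨fun i => (abs_le.1 (h3 i)).1, fun i => (abs_le.1 (h3 i)).2⟩
  let ev : MvPolynomial (Fin (n+1)) ℝ →ₐ[ℝ] C(Fin (n+1) → ℝ, ℝ) :=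
    MvPolynomial.aeval (fun i => (⟨fun x => x i, by fun_prop⟩ : C(Fin (n+1) → ℝ, ℝ)))
  have hev : ∀ p x, ev p x = MvPolynomial.eval x p := by
    intro p x
    induction p using MvPolynomial.induction_on with
    | C a => simp [ev]
    | add p q hp hq => simp [hp, hq]
    | mul_X p i hp => simp [hp]; simp [ev]
  have hsg : ∀ (p : MvPolynomial (Fin (n+1)) ℝ) x, MvPolynomial.eval x (hrSg _ p) = MvPolynomial.eval (-x) p := by
    intro p x
    induction p using MvPolynomial.induction_on with
    | C a => simp [hrSg]
    | add p q hp hq => simp [hp, hq]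
    | mul_X p i hp => simp [hp]; simp [hrSg]
  have hsgsg : ∀ p, hrSg (Fin (n+1)) (hrSg _ p) = p := by
    intro p
    induction p using MvPolynomial.induction_on with
    | C a => simp [hrSg]
    | add p q hp hq => simp [hp, hq]
    | mul_X p i hp => simp [hp]; simp [hrSg]
  have hsep : ev.range.SeparatesPoints := by
    intro x y hxy
    obtain ⟨i, hi⟩ := Function.ne_iff.1 hxy
    refine ⟨_, ⟨ev (MvPolynomial.X i), ⟨_, rfl⟩, rfl⟩, ?_⟩
    simpa [hev] using hi
  have happ : ∀ δ > 0, ∃ x ∈ K, ∀ i, |F i x| ≤ δ := by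
    intro δ hδ
    have h1 : ∀ i, ∃ p : MvPolynomial (Fin (n+1)) ℝ, ∀ x ∈ K,
        |MvPolynomial.eval x p - F i x| < δ / 2 := by
      intro i
      obtain ⟨_, ⟨p, rfl⟩, hp⟩ :=
        ContinuousMap.exists_mem_subalgebra_near_continuous_of_isCompact_of_separatesPoints hsep
        ⟨F i, hF i⟩ hKc (half_pos hδ)
      refine ⟨p, fun x hx => ?_⟩
      rw [← hev]
      exact hp x hx
    choose p hp using h1
    obtain ⟨x, hx, h⟩ := hr_poly n (fun i => (1 / 2 : ℝ) • (p i - hrSg _ (p i)))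
      (fun i => by rw [map_smul, map_sub, hsgsg, ← smul_neg, neg_sub]) (δ / 2) (half_pos hδ)
    refine ⟨x, hx, fun i => ?_⟩
    have e1 := h i
    have e2 := hp i x hx
    have e3 := hp i (-x) (hKneg x hx)
    rw [MvPolynomial.smul_eval, map_sub, hsg] at e1
    rw [hodd] at e3
    rw [abs_le] at *
    rw [abs_lt] at e2 e3
    constructor <;> linarith [e1.1, e1.2, e2.1, e2.2, e3.1, e3.2]
  obtain ⟨x0, hx0, _⟩ := happ 1 one_pos
  obtain ⟨x, hx, hmin⟩ := hKc.exists_isMinOn ⟨x0, hx0⟩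
    (f := fun x => ∑ i, |F i x|) (by fun_prop)
  refine ⟨x, hx, ?_⟩
  have hz : ∑ i, |F i x| ≤ 0 := by
    apply le_of_forall_pos_le_add
    intro δ hδ
    obtain ⟨y, hy, h⟩ := happ (δ / (n + 1)) (by positivity)
    have h1 : ∑ i, |F i x| ≤ ∑ i, |F i y| := hmin hy
    have h2 : ∑ i, |F i y| ≤ ∑ _i : Fin n, δ / (n + 1) := Finset.sum_le_sum fun i _ => h i
    have h3 : ∑ _i : Fin n, δ / (n + 1) ≤ δ := by
      simp
      rw [mul_div_assoc', div_le_iff₀ (by positivity)]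
      nlinarith
    linarith
  intro i
  have h1 := Finset.single_le_sum (f := fun i => |F i x|) (s := Finset.univ)
    (fun i _ => abs_nonneg _) (Finset.mem_univ i)
  exact abs_nonpos_iff.1 (h1.trans hz)

open MeasureTheory in
theorem hr_cdf (μ : Measure ℝ) [IsProbabilityMeasure μ] (hac : μ ≪ volume) :
    ∃ G : ℝ → ℝ, Continuous G ∧ ∀ a b, a ≤ b → (μ (Set.Icc a b)).toReal = G b - G a := by
  have hmono := ProbabilityTheory.monotone_cdf μ
  have hleft : ∀ x, Function.leftLim (ProbabilityTheory.cdf μ) x = ProbabilityTheory.cdf μ x := by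
    intro x
    have h1 := (ProbabilityTheory.cdf μ).measure_singleton x
    rw [ProbabilityTheory.measure_cdf, hac (by simp)] at h1
    have h2 := ENNReal.ofReal_eq_zero.1 h1.symm
    have h3 := hmono.leftLim_le (le_refl x)
    linarith
  refine ⟨ProbabilityTheory.cdf μ, ?_, ?_⟩
  · rw [continuous_iff_continuousAt]
    intro x
    rw [hmono.continuousAt_iff_leftLim_eq_rightLim, hleft, StieltjesFunction.rightLim_eq]
  · intro a b hab
    conv_lhs => rw [← ProbabilityTheory.measure_cdf μ]
    rw [StieltjesFunction.measure_Icc, hleft, ENNReal.toReal_ofReal]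
    linarith [hmono hab]

end

open MeasureTheory

/-- The Hobby–Rice theorem: `m` measures on `[0,1]` can be simultaneously
halved using at most `m` cuts. -/
theorem hobby_rice (m : ℕ) (hm : 0 < m)
    (μ : Fin m → Measure ℝ)
    (hprob : ∀ i, IsProbabilityMeasure (μ i))
    (hac : ∀ i, μ i ≪ volume)
    (hsupp : ∀ i, μ i (Set.Icc (0 : ℝ) 1) = 1) :
    ∃ (z : Fin (m + 2) → ℝ) (ε : Fin (m + 1) → ℝ),
      Monotone z ∧ z 0 = 0 ∧ z (Fin.last (m + 1)) = 1 ∧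
      (∀ k, ε k = 1 ∨ ε k = -1) ∧
      ∀ i, ∑ k : Fin (m + 1),
        ε k * (μ i (Set.Icc (z k.castSucc) (z k.succ))).toReal = 0 := by
  classical
  choose G hGc hG using fun i => hr_cdf (μ i) (hac i)
  let s : (Fin (m+1) → ℝ) → ℕ → ℝ := fun x k => ∑ j : Fin (m+1), if (j : ℕ) < k then x j ^ 2 else 0
  have hscont : ∀ k, Continuous (fun x => s x k) := by
    intro k
    refine continuous_finsetSum _ fun j _ => ?_
    split_ifs <;> fun_prop
  have hsmono : ∀ x, Monotone (s x) := by
    intro x a b hab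
    refine Finset.sum_le_sum fun j _ => ?_
    split_ifs
    · exact le_rfl
    · omega
    · positivity
    · exact le_rfl
  have hsucc : ∀ x (k : Fin (m+1)), s x (k + 1) = s x k + x k ^ 2 := by
    intro x k
    have : x k ^ 2 = ∑ j : Fin (m+1), if j = k then x j ^ 2 else 0 := by simp
    rw [this, ← Finset.sum_add_distrib]
    refine Finset.sum_congr rfl fun j _ => ?_
    rcases lt_trichotomy j k with h | h | h
    · have h' : (j : ℕ) < k := h
      rw [if_pos (by omega), if_pos h', if_neg h.ne, add_zero]
    · subst h; simp
    · have h' : (k : ℕ) < j := h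
      rw [if_neg (by omega), if_neg (by omega), if_neg h.ne', add_zero]
  let F : Fin m → (Fin (m+1) → ℝ) → ℝ := fun i x => ∑ k : Fin (m+1),
    (G i (s x k + max (x k) 0 ^ 2) - G i (s x k + min (x k) 0 ^ 2))
  have hF : ∀ i, Continuous (F i) := by
    intro i
    refine continuous_finsetSum _ fun k _ => ?_
    have h1 := hscont k
    have h2 := hGc i
    fun_prop
  have hodd : ∀ i x, F i (-x) = - F i x := by
    intro i x
    have h1 : ∀ k, s (-x) k = s x k := by intro k; simp [s]
    simp only [F]
    rw [← Finset.sum_neg_distrib]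
    refine Finset.sum_congr rfl fun k _ => ?_
    rw [h1, neg_sub]
    have h2 : max ((-x) k) 0 ^ 2 = min (x k) 0 ^ 2 := by
      rw [Pi.neg_apply, ← neg_zero, max_neg_neg, neg_sq, neg_zero]
    have h3 : min ((-x) k) 0 ^ 2 = max (x k) 0 ^ 2 := by
      rw [Pi.neg_apply, ← neg_zero, min_neg_neg, neg_sq, neg_zero]
    rw [h2, h3]
  obtain ⟨x, hx, hx0⟩ := hr_borsuk_ulam m F hF hodd
  refine ⟨fun k => s x k, fun k => if 0 ≤ x k then 1 else -1, ?_, ?_, ?_, ?_, ?_⟩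
  · intro a b hab
    exact hsmono x hab
  · simp [s]
  · rw [← hx]
    refine Finset.sum_congr rfl fun j _ => ?_
    rw [if_pos]
    exact j.2
  · intro k
    by_cases h : 0 ≤ x k
    · left; simp [h]
    · right; simp [h]
  · intro i
    refine Eq.trans ?_ (hx0 i)
    refine Finset.sum_congr rfl fun k _ => ?_
    rw [hG i _ _ (hsmono x (by simp))]
    simp only [Fin.val_succ, Fin.val_castSucc, hsucc]
    split_ifs with h
    · rw [max_eq_left h, min_eq_right h]; simp
    · push Not at h
      rw [max_eq_right h.le, min_eq_left h.le]; simp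
end

section
/- Let k and d be positive integers. Given any d probability measures μ₁, …, μ_d on ℝ^d, each absolutely continuous with respect to the Lebesgue measure, there exists a convex partition of ℝ^d into k parts C₁, …, C_k such that μ_i(C_j) = 1/k for every i = 1, …, d and every j = 1, …, k. -/
open MeasureTheory

set_option linter.unusedSimpArgs false
set_option linter.unusedSectionVars false
set_option linter.unusedVariables false

namespace CE

section chains

variable {p : ℕ} {X Y : Type*}

abbrev Ch (p : ℕ) (X : Type*) := List X →₀ ZMod p

noncomputable def Sub (P : List X → Prop) : Submodule (ZMod p) (Ch p X) :=
  Finsupp.supported (ZMod p) (ZMod p) {l | P l}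

lemma single_mem_Sub {P : List X → Prop} {l : List X} (h : P l) :
    (Finsupp.single l 1 : Ch p X) ∈ Sub (p := p) P :=
  Finsupp.single_mem_supported _ _ h

lemma Sub_mono {P Q : List X → Prop} (h : ∀ l, P l → Q l) {c : Ch p X} (hc : c ∈ Sub P) :
    c ∈ Sub Q := Finsupp.supported_mono (fun l hl => h l hl) hc

lemma Sub_induction {P : List X → Prop} {c : Ch p X} (hc : c ∈ Sub P) (Q : Submodule (ZMod p) (Ch p X))
    (h : ∀ l, P l → (Finsupp.single l 1 : Ch p X) ∈ Q) : c ∈ Q := by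
  unfold Sub at hc
  rw [Finsupp.supported_eq_span_single] at hc
  refine (Submodule.span_le.2 ?_) hc
  rintro _ ⟨l, hl, rfl⟩
  exact h l hl

lemma mapSub {P : List X → Prop} {Q : List Y → Prop} (f : Ch p X →ₗ[ZMod p] Ch p Y)
    (h : ∀ l, P l → f (Finsupp.single l 1) ∈ Sub Q) {c : Ch p X} (hc : c ∈ Sub P) :
    f c ∈ Sub Q :=
  Sub_induction hc ((Sub Q).comap f) h

lemma lin_congr {M : Type*} [AddCommGroup M] [Module (ZMod p) M] {P : List X → Prop}
    (f g : Ch p X →ₗ[ZMod p] M)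
    (h : ∀ l, P l → f (Finsupp.single l 1) = g (Finsupp.single l 1)) {c : Ch p X}
    (hc : c ∈ Sub P) : f c = g c :=
  Sub_induction hc (LinearMap.eqLocus f g) h

lemma mem_Sub_true (c : Ch p X) : c ∈ Sub (fun _ : List X => True) := by
  simp [Sub, Finsupp.mem_supported]

lemma lin_ext {M : Type*} [AddCommGroup M] [Module (ZMod p) M]
    (f g : Ch p X →ₗ[ZMod p] M)
    (h : ∀ l, f (Finsupp.single l 1) = g (Finsupp.single l 1)) (c : Ch p X) : f c = g c :=
  lin_congr f g (fun l _ => h l) (mem_Sub_true c)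

noncomputable def lin {M : Type*} [AddCommGroup M] [Module (ZMod p) M] (f : List X → M) :
    Ch p X →ₗ[ZMod p] M := Finsupp.linearCombination (ZMod p) f

@[simp] lemma lin_single {M : Type*} [AddCommGroup M] [Module (ZMod p) M] (f : List X → M)
    (l : List X) : lin f (Finsupp.single l (1 : ZMod p)) = f l := by
  simp [lin]

noncomputable def cone (a : X) : Ch p X →ₗ[ZMod p] Ch p X := lin (fun l => Finsupp.single (a :: l) 1)

noncomputable def bdL : List X → Ch p X
  | [] => 0
  | a :: l => Finsupp.single l 1 - cone a (bdL l)

noncomputable def bd : Ch p X →ₗ[ZMod p] Ch p X := lin bdL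

lemma bd_cone (a : X) (c : Ch p X) : bd (cone a c) = c - cone a (bd c) :=
  lin_ext (bd ∘ₗ cone a) (LinearMap.id - cone a ∘ₗ bd) (fun l => by simp [bd, cone, bdL]) c

lemma bd_bdL (l : List X) : bd (bdL l : Ch p X) = 0 := by
  induction l with
  | nil => simp [bdL]
  | cons a l ih =>
    rw [bdL, map_sub, bd_cone, ih]
    simp [bd]

lemma bd_bd (c : Ch p X) : bd (bd c) = 0 :=
  lin_ext (bd ∘ₗ bd) 0 (fun l => by simpa [bd] using bd_bdL l) c

noncomputable def mp (f : X → Y) : Ch p X →ₗ[ZMod p] Ch p Y :=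
  lin (fun l => Finsupp.single (l.map f) 1)

lemma mp_cone (f : X → Y) (a : X) (c : Ch p X) : mp f (cone a c) = cone (f a) (mp f c) :=
  lin_ext (mp f ∘ₗ cone a) (cone (f a) ∘ₗ mp f) (fun l => by simp [mp, cone]) c

lemma mp_bdL (f : X → Y) (l : List X) : mp f (bdL l : Ch p X) = bdL (l.map f) := by
  induction l with
  | nil => simp [bdL]
  | cons a l ih =>
    rw [bdL, map_sub, mp_cone, ih, List.map_cons, bdL]
    simp [mp]

lemma mp_bd (f : X → Y) (c : Ch p X) : mp f (bd c) = bd (mp f c) :=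
  lin_ext (mp f ∘ₗ bd) (bd ∘ₗ mp f) (fun l => by simpa [bd, mp] using mp_bdL f l) c

lemma bdL_sub (l : List X) :
    (bdL l : Ch p X) ∈ Sub (fun l' : List X => l'.Sublist l ∧ l'.length + 1 = l.length) := by
  induction l with
  | nil => simp [bdL]
  | cons a l ih =>
    rw [bdL]
    refine Submodule.sub_mem _ (single_mem_Sub ⟨by simp, by simp⟩) ?_
    refine mapSub (cone a) ?_ ih
    rintro l' ⟨h1, h2⟩
    rw [cone, lin_single]
    exact single_mem_Sub ⟨h1.cons_cons a, by simp [h2]⟩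

end chains

section labels

variable {p : ℕ}

abbrev Lb (p : ℕ) := ℕ × ZMod p

def Dec (l : List (Lb p)) : Prop := l.Pairwise (fun x y => y.1 < x.1)

noncomputable def insL (a : Lb p) : List (Lb p) → Ch p (Lb p)
  | [] => Finsupp.single [a] 1
  | b :: l => if b.1 < a.1 then Finsupp.single (a :: b :: l) 1 else
      if b.1 = a.1 then 0 else - cone b (insL a l)

noncomputable def ins (a : Lb p) : Ch p (Lb p) →ₗ[ZMod p] Ch p (Lb p) := lin (insL a)

lemma insL_top (a : Lb p) (l : List (Lb p)) (h : ∀ x ∈ l, x.1 < a.1) :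
    insL a l = Finsupp.single (a :: l) 1 := by
  cases l with
  | nil => simp [insL]
  | cons b l => simp [insL, h b (by simp)]

lemma ins_top (a : Lb p) (c : Ch p (Lb p)) (hc : c ∈ Sub (fun l => ∀ x ∈ l, x.1 < a.1)) :
    ins a c = cone a c :=
  lin_congr (ins a) (cone a) (fun l hl => by simp [ins, cone, insL_top a l hl]) hc

lemma ins_cone_lt (a b : Lb p) (h : a.1 < b.1) (c : Ch p (Lb p)) :
    ins a (cone b c) = - cone b (ins a c) :=
  lin_ext (ins a ∘ₗ cone b) (- (cone b ∘ₗ ins a))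
    (fun l => by simp [ins, cone, insL, h.not_gt, h.ne']) c

lemma ins_cone_eq (a b : Lb p) (h : b.1 = a.1) (c : Ch p (Lb p)) :
    ins a (cone b c) = 0 :=
  lin_ext (ins a ∘ₗ cone b) 0
    (fun l => by simp [ins, cone, insL, h]) c

lemma insL_bd (a : Lb p) (l : List (Lb p)) (hl : Dec l) (hc : ∀ b ∈ l, b.1 = a.1 → b = a) :
    bd (insL a l) = Finsupp.single l 1 - ins a (bdL l) := by
  induction l with
  | nil => simp [insL, bd, bdL, cone]
  | cons b l ih =>
    have hl' := List.pairwise_cons.1 hl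
    rcases lt_trichotomy b.1 a.1 with h | h | h
    · have htop : ∀ x ∈ b :: l, x.1 < a.1 := by
        intro x hx
        rcases List.mem_cons.1 hx with rfl | hx
        · exact h
        · exact (hl'.1 x hx).trans h
      rw [insL_top a _ htop, ins_top]
      · simp [bd, bdL]
      · refine Sub_mono ?_ (bdL_sub (b :: l))
        rintro l' ⟨h1, -⟩ x hx
        exact htop x (h1.subset hx)
    · have hab : b = a := hc b (by simp) h
      subst hab
      rw [bdL, map_sub, ins_cone_eq b b rfl, ins, lin_single,
        insL_top b l (fun x hx => hl'.1 x hx)]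
      simp [insL]
    · have := ih hl'.2 (fun x hx => hc x (by simp [hx]))
      rw [insL, if_neg h.not_gt, if_neg h.ne', map_neg, bd_cone, this, bdL, map_sub, map_sub,
        ins_cone_lt a b h]
      simp only [ins, lin_single, cone]
      abel

noncomputable def srtL : List (Lb p) → Ch p (Lb p)
  | [] => Finsupp.single [] 1
  | a :: l => ins a (srtL l)

noncomputable def srt : Ch p (Lb p) →ₗ[ZMod p] Ch p (Lb p) := lin srtL

lemma insL_sub (a : Lb p) (l : List (Lb p)) (hl : Dec l) :
    insL a l ∈ Sub (fun l' : List (Lb p) => Dec l' ∧ (∀ x ∈ l', x ∈ a :: l) ∧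
      l'.length = l.length + 1) := by
  induction l with
  | nil => exact single_mem_Sub ⟨by simp [Dec], by simp, by simp⟩
  | cons b l ih =>
    have hl' := List.pairwise_cons.1 hl
    rw [insL]
    split_ifs with h1 h2
    · refine single_mem_Sub ⟨?_, by simp, by simp⟩
      refine List.pairwise_cons.2 ⟨?_, hl⟩
      intro x hx
      rcases List.mem_cons.1 hx with rfl | hx
      · exact h1
      · exact (hl'.1 x hx).trans h1
    · exact Submodule.zero_mem _
    · refine Submodule.neg_mem _ ?_
      refine mapSub (cone b) ?_ (ih hl'.2)
      rintro l' ⟨h3, h4, h5⟩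
      rw [cone, lin_single]
      refine single_mem_Sub ⟨List.pairwise_cons.2 ⟨?_, h3⟩, ?_, by simp [h5]⟩
      · intro x hx
        rcases List.mem_cons.1 (h4 x hx) with rfl | hx
        · omega
        · exact hl'.1 x hx
      · intro x hx
        have := h4 x
        simp only [List.mem_cons] at *
        tauto

lemma srtL_sub (l : List (Lb p)) :
    srtL l ∈ Sub (fun l' : List (Lb p) => Dec l' ∧ (∀ x ∈ l', x ∈ l) ∧
      l'.length = l.length) := by
  induction l with
  | nil => exact single_mem_Sub ⟨by simp [Dec], by simp, by simp⟩
  | cons a l ih =>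
    refine mapSub (ins a) ?_ ih
    rintro l' ⟨h1, h2, h3⟩
    rw [ins, lin_single]
    refine Sub_mono ?_ (insL_sub a l' h1)
    rintro l'' ⟨h4, h5, h6⟩
    refine ⟨h4, ?_, by simp [h6, h3]⟩
    intro x hx
    rcases List.mem_cons.1 (h5 x hx) with rfl | hx
    · simp
    · simp [h2 x hx]

lemma srt_cone (a : Lb p) (c : Ch p (Lb p)) : srt (cone a c) = ins a (srt c) :=
  lin_ext (srt ∘ₗ cone a) (ins a ∘ₗ srt) (fun l => by simp [srt, cone, srtL]) c

lemma srtL_bd (l : List (Lb p)) (hl : ∀ x ∈ l, ∀ y ∈ l, x.1 = y.1 → x = y) :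
    bd (srtL l) = srt (bdL l) := by
  induction l with
  | nil => simp [srtL, bdL, bd]
  | cons a l ih =>
    have ih' := ih (fun x hx y hy => hl x (by simp [hx]) y (by simp [hy]))
    have key : bd (ins a (srtL l)) = srtL l - ins a (bd (srtL l)) := by
      refine lin_congr (bd ∘ₗ ins a) (LinearMap.id - ins a ∘ₗ bd) ?_ (srtL_sub l)
      rintro l' ⟨h1, h2, -⟩
      have := insL_bd a l' h1 (fun b hb h => hl b (by simp [h2 b hb]) a (by simp) h)
      simpa [ins, bd] using this
    rw [srtL, key, ih', bdL, map_sub, srt_cone]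
    simp [srt]

def shL (h : ZMod p) (a : Lb p) : Lb p := (a.1, a.2 + h)

lemma mp_insL (h : ZMod p) (a : Lb p) (l : List (Lb p)) :
    mp (shL h) (insL a l) = insL (shL h a) (l.map (shL h)) := by
  induction l with
  | nil => simp [insL, mp]
  | cons b l ih =>
    simp only [insL, List.map_cons, shL]
    split_ifs
    · simp [mp, shL]
    · simp
    · rw [map_neg, mp_cone, ih]; rfl

lemma mp_srtL (h : ZMod p) (l : List (Lb p)) :
    mp (shL h) (srtL l) = srtL (l.map (shL h)) := by
  induction l with
  | nil => simp [srtL, mp]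
  | cons b l ih =>
    rw [List.map_cons, srtL, srtL, ← ih]
    exact lin_ext (mp (shL h) ∘ₗ ins b) (ins (shL h b) ∘ₗ mp (shL h))
      (fun l => by simpa [ins, mp] using mp_insL h b l) _

lemma srtL_zero (N : ℕ) (l : List (Lb p)) (hl : ∀ x ∈ l, x.1 < N) (hlen : N < l.length) :
    srtL l = 0 := by
  have h := srtL_sub l
  have : ∀ l' : List (Lb p), ∀ N, Dec l' → (∀ x ∈ l', x.1 < N) → l'.length ≤ N := by
    intro l'
    induction l' with
    | nil => simp
    | cons a l' ih =>
      intro N h1 h2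
      have h1' := List.pairwise_cons.1 h1
      have := ih a.1 h1'.2 h1'.1
      have := h2 a (by simp)
      simp
      omega
  have h0 : srtL l ∈ Sub (p := p) (fun _ : List (Lb p) => False) := by
    refine Sub_mono ?_ h
    rintro l' ⟨h1, h2, h3⟩
    have := this l' N h1 (fun x hx => hl x (h2 x hx))
    omega
  exact lin_congr LinearMap.id 0 (fun l h => h.elim) h0

end labels

section resolution

variable {p : ℕ} [NeZero p]

abbrev RR (p : ℕ) := (ZMod p → ZMod p) × (ZMod p → ZMod p)

def shf (h : ZMod p) : (ZMod p → ZMod p) →ₗ[ZMod p] (ZMod p → ZMod p) where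
  toFun x := fun t => x (t - h)
  map_add' _ _ := rfl
  map_smul' _ _ := rfl

def eps : (ZMod p → ZMod p) →ₗ[ZMod p] ZMod p where
  toFun x := ∑ t, x t
  map_add' _ _ := by simp [Finset.sum_add_distrib]
  map_smul' _ _ := by simp [Finset.mul_sum]

def ps (h : ZMod p) : (ZMod p → ZMod p) →ₗ[ZMod p] (ZMod p → ZMod p) where
  toFun x := fun t => - ∑ u ∈ Finset.range (t - h).val, x (h + u + 1)
  map_add' _ _ := by ext; simp [Finset.sum_add_distrib]; ring
  map_smul' _ _ := by ext; simp [Finset.mul_sum]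

def pt (h : ZMod p) : (ZMod p → ZMod p) →ₗ[ZMod p] (ZMod p → ZMod p) where
  toFun x := fun t => if t = h then x h else 0
  map_add' _ _ := by ext t; by_cases h : t = h <;> simp [h]
  map_smul' _ _ := by ext t; by_cases h : t = h <;> simp [h]

def dR (x : RR p) : RR p := (fun _ => eps x.2, shf 1 x.1 - x.1)

def sR (h : ZMod p) : RR p →ₗ[ZMod p] RR p :=
  ((ps h) ∘ₗ LinearMap.snd _ _ _).prod ((pt h) ∘ₗ LinearMap.fst _ _ _)

lemma dR_linear : ∃ f : RR p →ₗ[ZMod p] RR p, ∀ x, f x = dR x := by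
  refine ⟨(LinearMap.pi (fun _ => eps ∘ₗ LinearMap.snd _ _ _)).prod
    ((shf 1 - LinearMap.id) ∘ₗ LinearMap.fst _ _ _), fun x => rfl⟩

lemma sum_range_eps (h : ZMod p) (x : ZMod p → ZMod p) :
    ∑ u ∈ Finset.range p, x (h + u) = eps x := by
  have : ∑ t : ZMod p, x t = ∑ t : ZMod p, x (h + t) :=
    (Equiv.sum_comp (Equiv.addLeft h) x).symm
  simp only [eps, LinearMap.coe_mk, AddHom.coe_mk, this]
  refine Finset.sum_bij' (fun u _ => (u : ZMod p)) (fun t _ => t.val) ?_ ?_ ?_ ?_ ?_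
  · simp
  · intro a _; simpa using ZMod.val_lt a
  · intro a ha; exact ZMod.val_cast_of_lt (by simpa using ha)
  · intro a _; simp
  · simp

lemma dsR (hp : 1 < p) (h : ZMod p) (x : RR p) : dR (sR h x) + sR h (dR x) = x := by
  have : Fact (1 < p) := ⟨hp⟩
  obtain ⟨x, y⟩ := x
  ext t
  · change ∑ u, (if u = h then x h else 0) +
      -(∑ u ∈ Finset.range (t - h).val, (x (h + u + 1 - 1) - x (h + u + 1))) = x t
    have h2 : ∑ u ∈ Finset.range (t - h).val, (x (h + u + 1 - 1) - x (h + u + 1))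
        = x h - x t := by
      have := Finset.sum_range_sub' (fun u : ℕ => x (h + u)) (t - h).val
      simp only [Nat.cast_add, Nat.cast_one, Nat.cast_zero, add_zero, ZMod.natCast_val,
        ZMod.cast_id', id_eq, add_sub_cancel, ← add_assoc] at this
      simpa using this
    rw [h2]
    simp
  · change (-(∑ u ∈ Finset.range (t - 1 - h).val, y (h + u + 1)) -
      -(∑ u ∈ Finset.range (t - h).val, y (h + u + 1))) + (if t = h then ∑ u, y u else 0) = y t
    by_cases hth : t = h
    · subst hth
      have h1 : (t - 1 - t).val = p - 1 := by
        have : t - 1 - t = (-1 : ZMod p) := by ring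
        rw [this]
        obtain ⟨q, rfl⟩ : ∃ q, p = q + 1 := ⟨p - 1, by omega⟩
        exact ZMod.val_neg_one q
      have h2 := sum_range_eps t y
      obtain ⟨q, rfl⟩ : ∃ q, p = q + 1 := ⟨p - 1, by omega⟩
      rw [Finset.sum_range_succ'] at h2
      simp only [eps, LinearMap.coe_mk, AddHom.coe_mk] at h2
      rw [h1]
      simp only [Nat.cast_add, Nat.cast_one, ← add_assoc] at h2
      simp [← h2]
    · have h0 : t - h ≠ 0 := sub_ne_zero.2 hth
      have h1 : (t - h).val = (t - 1 - h).val + 1 := by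
        have e : t - h = (t - 1 - h) + 1 := by ring
        have hne : (t - 1 - h) + 1 ≠ 0 := by rwa [← e]
        have : (t - 1 - h).val + 1 < p := by
          have h3 := ZMod.val_lt (t - 1 - h)
          rcases Nat.lt_or_ge ((t - 1 - h).val + 1) p with h4 | h4
          · exact h4
          · exfalso
            apply hne
            have h5 : (t - 1 - h).val + 1 = p := by omega
            have : ((((t - 1 - h).val + 1 : ℕ)) : ZMod p) = 0 := by rw [h5]; simp
            simpa using this
        conv_lhs => rw [e]
        rw [ZMod.val_add_of_lt]
        · rw [ZMod.val_one]
        · rwa [ZMod.val_one]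
      rw [h1, Finset.sum_range_succ]
      have e : h + (((t - 1 - h).val : ℕ) : ZMod p) + 1 = t := by simp
      rw [e]
      simp [hth]

def shR (h : ZMod p) : RR p →ₗ[ZMod p] RR p := (shf h).prodMap (shf h)

lemma sR_shR (g h : ZMod p) (x : RR p) : sR (g + h) (shR h x) = shR h (sR g x) := by
  obtain ⟨x, y⟩ := x
  ext t
  · change -(∑ u ∈ Finset.range (t - (g + h)).val, y (g + h + u + 1 - h)) =
      -(∑ u ∈ Finset.range (t - h - g).val, y (g + u + 1))
    rw [show t - (g + h) = t - h - g by ring]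
    congr 1
    refine Finset.sum_congr rfl fun u _ => ?_
    congr 1
    ring
  · change (if t = g + h then x (g + h - h) else 0) = (if t - h = g then x g else 0)
    by_cases hh : t = g + h
    · subst hh; simp
    · rw [if_neg hh, if_neg (fun h' => hh (by rw [← h']; ring))]

def alL : List (Lb p) → RR p
  | [] => (fun _ => 1, 0)
  | a :: l => sR a.2 (alL l)

noncomputable def al : Ch p (Lb p) →ₗ[ZMod p] RR p := lin alL

lemma al_cone (a : Lb p) (c : Ch p (Lb p)) : al (cone a c) = sR a.2 (al c) :=
  lin_ext (al ∘ₗ cone a) (sR a.2 ∘ₗ al) (fun l => by simp [al, cone, alL]) c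

lemma alL_bd (hp : 1 < p) (l : List (Lb p)) : dR (alL l) = al (bdL l) := by
  induction l with
  | nil => ext t <;> simp [dR, alL, bdL, eps, shf]
  | cons a l ih =>
    have := dsR hp a.2 (alL l)
    rw [bdL, map_sub, al_cone, ← ih, alL, al, lin_single, eq_sub_iff_add_eq, this]

lemma al_bd (hp : 1 < p) (c : Ch p (Lb p)) : dR (al c) = al (bd c) := by
  obtain ⟨f, hf⟩ := dR_linear (p := p)
  rw [← hf]
  exact lin_ext (f ∘ₗ al) (al ∘ₗ bd) (fun l => by simpa [al, bd, hf] using alL_bd hp l) c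

lemma alL_sh (h : ZMod p) (l : List (Lb p)) : alL (l.map (shL h)) = shR h (alL l) := by
  induction l with
  | nil => ext t <;> simp [alL, shR, shf]
  | cons a l ih => rw [List.map_cons, alL, alL, ih, ← sR_shR]; rfl

lemma al_sh (h : ZMod p) (c : Ch p (Lb p)) : al (mp (shL h) c) = shR h (al c) :=
  lin_ext (al ∘ₗ mp (shL h)) (shR h ∘ₗ al) (fun l => by simpa [al, mp] using alL_sh h l) c

lemma eps_odd (u : ZMod p → ZMod p) (h : shf 1 u = u) : eps u = 0 := by
  have h1 : ∀ n : ℕ, u n = u 0 := by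
    intro n
    induction n with
    | zero => simp
    | succ n ih =>
      rw [← ih]
      have := congrFun h ((n + 1 : ℕ) : ZMod p)
      simp [shf] at this
      rw [Nat.cast_succ, this]
  have h2 : ∀ t, u t = u 0 := fun t => by
    have := h1 t.val
    simpa using this
  simp [eps, h2]

end resolution

end CE
namespace CE

section subdiv

variable {p : ℕ} {X : Type*} [NormedAddCommGroup X] [NormedSpace ℝ X]

noncomputable def bary (l : List X) : X := (l.length : ℝ)⁻¹ • l.sum

lemma bary_eq (l : List X) : bary l = ∑ i : Fin l.length, (l.length : ℝ)⁻¹ • l[i] := by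
  rw [bary, ← Finset.smul_sum]
  congr 1
  exact (Fin.sum_univ_getElem l).symm

lemma bary_mem {K : Set X} (hK : Convex ℝ K) (l : List X) (hl : l ≠ []) (h : ∀ x ∈ l, x ∈ K) :
    bary l ∈ K := by
  rw [bary_eq]
  have h0 : (l.length : ℝ) ≠ 0 := by simpa using hl
  refine hK.sum_mem (fun i _ => by positivity) ?_ (fun i _ => h _ (by simp))
  simp [h0]

lemma bary_dist (l : List X) (v : X) (hv : v ∈ l) (δ : ℝ) (M : ℕ) (hM : l.length ≤ M)
    (h : ∀ x ∈ l, ∀ y ∈ l, dist x y ≤ δ) : dist (bary l) v ≤ (1 - 1 / (M : ℝ)) * δ := by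
  obtain ⟨i0, hi0, rfl⟩ := List.getElem_of_mem hv
  have hn : (0 : ℝ) < l.length := by
    have : 0 < l.length := by omega
    exact_mod_cast this
  have hδ : 0 ≤ δ := dist_nonneg.trans (h _ hv _ hv)
  have e : bary l - l[i0] = ∑ i : Fin l.length, (l.length : ℝ)⁻¹ • (l[i] - l[i0]) := by
    simp only [smul_sub, Finset.sum_sub_distrib, ← bary_eq]
    congr 1
    simp only [Finset.sum_const, Finset.card_univ, Fintype.card_fin]
    rw [← Nat.cast_smul_eq_nsmul ℝ, smul_smul, mul_inv_cancel₀ hn.ne', one_smul]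
  have h1 : ∀ i : Fin l.length, ‖(l.length : ℝ)⁻¹ • (l[i] - l[i0])‖ ≤
      (l.length : ℝ)⁻¹ * (δ - if i = ⟨i0, hi0⟩ then δ else 0) := by
    intro i
    rw [norm_smul, norm_inv, Real.norm_natCast]
    refine mul_le_mul_of_nonneg_left ?_ (by positivity)
    split_ifs with hi
    · subst hi; simp
    · rw [sub_zero, ← dist_eq_norm]
      exact h _ (by simp) _ hv
  rw [dist_eq_norm, e]
  refine (norm_sum_le_of_le _ (fun i _ => h1 i)).trans ?_
  rw [← Finset.mul_sum, Finset.sum_sub_distrib]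
  simp only [Finset.sum_const, Finset.card_univ, Fintype.card_fin, Finset.sum_ite_eq',
    Finset.mem_univ, if_true, nsmul_eq_mul]
  have h2 : (l.length : ℝ)⁻¹ * (l.length * δ - δ) = (1 - 1 / (l.length : ℝ)) * δ := by
    field_simp
  rw [h2]
  refine mul_le_mul_of_nonneg_right ?_ hδ
  have : (1 : ℝ) / M ≤ 1 / l.length := one_div_le_one_div_of_le hn (by exact_mod_cast hM)
  linarith

open Classical in
noncomputable def sdn : ℕ → (Ch p X →ₗ[ZMod p] Ch p X)
  | 0 => LinearMap.id
  | n + 1 => lin (fun l => if l = [] then Finsupp.single l 1 else cone (bary l) (sdn n (bdL l)))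

lemma sdn_nil (n : ℕ) : sdn n (Finsupp.single [] 1 : Ch p X) = Finsupp.single [] 1 := by
  cases n <;> simp [sdn]

lemma sdn_succ (n : ℕ) (l : List X) (hl : l ≠ []) : sdn (n + 1) (Finsupp.single l 1 : Ch p X) =
    cone (bary l) (sdn n (bdL l)) := by
  simp [sdn, hl]

lemma bdL_len (n : ℕ) (l : List X) (h : l.length ≤ n + 1) :
    (bdL l : Ch p X) ∈ Sub (fun l' : List X => l'.length ≤ n) :=
  Sub_mono (fun l' h' => by have := h'.2; omega) (bdL_sub l)

lemma sdn_stable (n : ℕ) (l : List X) (h : l.length ≤ n) :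
    sdn (n + 1) (Finsupp.single l 1 : Ch p X) = sdn n (Finsupp.single l 1) := by
  induction n generalizing l with
  | zero =>
    have : l = [] := by simpa using h
    subst this
    simp [sdn_nil]
  | succ n ih =>
    by_cases hl : l = []
    · subst hl; simp [sdn_nil]
    · rw [sdn_succ _ l hl, sdn_succ _ l hl]
      congr 1
      refine lin_congr _ _ ?_ (bdL_len n l h)
      intro l' hl'
      exact ih l' hl'

lemma sdn_bd (n : ℕ) (l : List X) (h : l.length ≤ n) :
    bd (sdn n (Finsupp.single l 1 : Ch p X)) = sdn n (bdL l) := by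
  induction n generalizing l with
  | zero =>
    have : l = [] := by simpa using h
    subst this
    simp [sdn_nil, bd, bdL]
  | succ n ih =>
    by_cases hl : l = []
    · subst hl; simp [sdn_nil, bd, bdL]
    · have h1 : bd (sdn n (bdL l : Ch p X)) = 0 := by
        have : bd (sdn n (bdL l : Ch p X)) = sdn n (bd (bdL l : Ch p X)) :=
          lin_congr (bd ∘ₗ sdn n) (sdn n ∘ₗ bd) (fun l' hl' => by
            simpa [bd] using ih l' hl') (bdL_len n l h)
        rw [this, bd_bdL, map_zero]
      rw [sdn_succ _ l hl, bd_cone, h1, map_zero, sub_zero]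
      symm
      refine lin_congr _ _ ?_ (bdL_len n l h)
      intro l' hl'
      exact sdn_stable n l' hl'

lemma sdn_mp (f : X →ₗ[ℝ] X) (n : ℕ) (c : Ch p X) : mp f (sdn n c) = sdn n (mp f c) := by
  induction n generalizing c with
  | zero => rfl
  | succ n ih =>
    refine lin_ext (mp f ∘ₗ sdn (n + 1)) (sdn (n + 1) ∘ₗ mp f) (fun l => ?_) c
    by_cases hl : l = []
    · subst hl
      have : mp f (Finsupp.single [] 1 : Ch p X) = Finsupp.single [] 1 := by simp [mp]
      simp [sdn_nil, this]
    · have hb : f (bary l) = bary (l.map f) := by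
        simp [bary, map_list_sum]
      rw [LinearMap.comp_apply, LinearMap.comp_apply, sdn_succ _ l hl, mp_cone, ih, mp_bdL, hb, mp,
        lin_single, sdn_succ]
      simpa using hl

lemma sdn_geo (M : ℕ) (δ : ℝ) (n : ℕ) (l : List X) (hn : l.length ≤ n)
    (hM : l.length ≤ M) (K : Set X) (hK : Convex ℝ K) (hlK : ∀ x ∈ l, x ∈ K)
    (hd : ∀ x ∈ l, ∀ y ∈ l, dist x y ≤ δ) :
    sdn n (Finsupp.single l 1 : Ch p X) ∈ Sub (fun l' : List X => l'.length = l.length ∧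
      (∀ x ∈ l', x ∈ K) ∧ ∀ x ∈ l', ∀ y ∈ l', dist x y ≤ (1 - 1 / (M : ℝ)) * δ) := by
  induction n generalizing l K with
  | zero =>
    have : l = [] := by simpa using hn
    subst this
    rw [sdn_nil]
    exact single_mem_Sub ⟨rfl, by simp, by simp⟩
  | succ n ih =>
    by_cases hl : l = []
    · subst hl
      rw [sdn_nil]
      exact single_mem_Sub ⟨rfl, by simp, by simp⟩
    · rw [sdn_succ _ l hl]
      set ρ := (1 - 1 / (M : ℝ)) * δ
      have hρ : 0 ≤ ρ := by
        obtain ⟨v, hv⟩ := List.exists_mem_of_ne_nil l hl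
        exact dist_nonneg.trans (bary_dist l v hv δ M hM hd)
      set K' := K ∩ Metric.closedBall (bary l) ρ
      have hK' : Convex ℝ K' := hK.inter (convex_closedBall _ _)
      have hlK' : ∀ x ∈ l, x ∈ K' := fun x hx => ⟨hlK x hx, by
        rw [Metric.mem_closedBall, dist_comm]; exact bary_dist l x hx δ M hM hd⟩
      have h1 : sdn n (bdL l : Ch p X) ∈ Sub (fun l' : List X => l'.length + 1 = l.length ∧
          (∀ x ∈ l', x ∈ K') ∧ ∀ x ∈ l', ∀ y ∈ l', dist x y ≤ ρ) := by
        refine mapSub (sdn n) ?_ (bdL_sub l)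
        rintro l' ⟨h1, h2⟩
        refine Sub_mono ?_ (ih l' (by omega) (by omega) K' hK' (fun x hx => hlK' x (h1.subset hx))
          (fun x hx y hy => hd x (h1.subset hx) y (h1.subset hy)))
        rintro l'' ⟨h3, h4, h5⟩
        exact ⟨by omega, h4, h5⟩
      refine mapSub (cone (bary l)) ?_ h1
      rintro l' ⟨h3, h4, h5⟩
      rw [cone, lin_single]
      refine single_mem_Sub ⟨by simpa using h3, ?_, ?_⟩
      · intro x hx
        rcases List.mem_cons.1 hx with rfl | hx
        · exact bary_mem hK l hl hlK
        · exact (h4 x hx).1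
      · intro x hx y hy
        rcases List.mem_cons.1 hx with rfl | hx <;> rcases List.mem_cons.1 hy with rfl | hy
        · simpa using hρ
        · have := (h4 y hy).2
          rw [Metric.mem_closedBall, dist_comm] at this
          exact this
        · exact (h4 x hx).2
        · exact h5 x hx y hy

/-- one subdivision step for chains -/
lemma sd_iter (M : ℕ) (hM : 0 < M) (Good : Set X) (δ : ℝ) (m : ℕ) (hm : m ≤ M) (c : Ch p X)
    (hc : c ∈ Sub (fun l : List X => l.length = m ∧ (∃ K, Convex ℝ K ∧ K ⊆ Good ∧ ∀ x ∈ l, x ∈ K) ∧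
      ∀ x ∈ l, ∀ y ∈ l, dist x y ≤ δ)) (r : ℕ) :
    ((sdn M)^[r] c : Ch p X) ∈ Sub (fun l : List X => l.length = m ∧
      (∃ K, Convex ℝ K ∧ K ⊆ Good ∧ ∀ x ∈ l, x ∈ K) ∧
      ∀ x ∈ l, ∀ y ∈ l, dist x y ≤ (1 - 1 / (M : ℝ)) ^ r * δ) := by
  induction r with
  | zero => simpa using hc
  | succ r ih =>
    rw [Function.iterate_succ_apply']
    refine mapSub (sdn M) ?_ ih
    rintro l ⟨h1, ⟨K, hK, hKG, hl⟩, h2⟩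
    refine Sub_mono ?_ (sdn_geo M _ M l (by omega) (by omega) K hK hl h2)
    rintro l' ⟨h3, h4, h5⟩
    refine ⟨by omega, ⟨K, hK, hKG, h4⟩, ?_⟩
    rw [pow_succ', mul_assoc]
    exact h5

lemma sd_iter_bd (M : ℕ) (c : Ch p X) (hc : c ∈ Sub (fun l : List X => l.length ≤ M)) (r : ℕ)
    : bd ((sdn M)^[r] c : Ch p X) = (sdn M)^[r] (bd c) ∧
    ((sdn M)^[r] c : Ch p X) ∈ Sub (fun l : List X => l.length ≤ M) := by
  induction r with
  | zero => exact ⟨rfl, hc⟩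
  | succ r ih =>
    rw [Function.iterate_succ_apply', Function.iterate_succ_apply']
    constructor
    · rw [← ih.1]
      exact lin_congr (bd ∘ₗ sdn M) (sdn M ∘ₗ bd)
        (fun l' hl' => by simpa [bd] using sdn_bd M l' hl') ih.2
    · refine mapSub (sdn M) ?_ ih.2
      intro l hl
      by_cases hl0 : l = []
      · subst hl0; rw [sdn_nil]; exact single_mem_Sub hl
      · have : ∃ δ : ℝ, ∀ x ∈ l, ∀ y ∈ l, dist x y ≤ δ := by
          have hb : Bornology.IsBounded {x | x ∈ l} := (List.finite_toSet l).isBounded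
          obtain ⟨C, hC⟩ := Metric.isBounded_iff.1 hb
          exact ⟨C, fun x hx y hy => hC hx hy⟩
        obtain ⟨δ, hδ⟩ := this
        exact Sub_mono (fun l' h => by have := h.1; omega)
          (sdn_geo M δ M l hl hl Set.univ convex_univ (by simp) hδ)

variable [NeZero p]

noncomputable def DD (sh : ZMod p → X →ₗ[ℝ] X) (n : ℕ) : Ch p X →ₗ[ZMod p] Ch p X :=
  if Even n then mp (sh 1) - LinearMap.id else ∑ h, mp (sh h)

noncomputable def hh (sh : ZMod p → X →ₗ[ℝ] X) (v : ℕ → X) : ℕ → Ch p X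
  | 0 => Finsupp.single [v 0] 1
  | n + 1 => cone (v (n + 1)) (DD sh n (hh sh v n))

lemma mp_mp (sh : ZMod p → X →ₗ[ℝ] X) (hsh : ∀ a b x, sh a (sh b x) = sh (a + b) x) (a b : ZMod p)
    (c : Ch p X) : mp (sh a) (mp (sh b) c) = mp (sh (a + b)) c :=
  lin_ext (mp (sh a) ∘ₗ mp (sh b)) (mp (sh (a + b))) (fun l => by
    simp [mp, Function.comp_def, hsh]) c

lemma DD_bd (sh : ZMod p → X →ₗ[ℝ] X) (n : ℕ) (c : Ch p X) :
    bd (DD sh n c) = DD sh n (bd c) := by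
  unfold DD
  split_ifs
  · simp [mp_bd]
  · simp [LinearMap.sum_apply, mp_bd]

lemma DD_sdn (sh : ZMod p → X →ₗ[ℝ] X) (n M r : ℕ) (c : Ch p X) :
    (sdn M)^[r] (DD sh n c) = DD sh n ((sdn M)^[r] c) := by
  induction r with
  | zero => rfl
  | succ r ih =>
    rw [Function.iterate_succ_apply', Function.iterate_succ_apply', ih]
    unfold DD
    split_ifs
    · simp [sdn_mp]
    · simp [LinearMap.sum_apply, sdn_mp]

lemma DD_DD (sh : ZMod p → X →ₗ[ℝ] X) (hsh : ∀ a b x, sh a (sh b x) = sh (a + b) x) (n : ℕ)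
    (c : Ch p X) : DD sh (n + 1) (DD sh n c) = 0 := by
  have key : ∑ h, mp (sh (1 + h)) c = ∑ h, mp (sh h) c :=
    Equiv.sum_comp (Equiv.addLeft (1 : ZMod p)) (fun h => mp (sh h) c)
  have key' : ∑ h, mp (sh (h + 1)) c = ∑ h, mp (sh h) c :=
    Equiv.sum_comp (Equiv.addRight (1 : ZMod p)) (fun h => mp (sh h) c)
  unfold DD
  by_cases hn : Even n
  · have : ¬ Even (n + 1) := by simpa [Nat.even_add_one] using hn
    simp [hn, this, LinearMap.sum_apply, mp_mp sh hsh, key']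
  · have : Even (n + 1) := by simpa [Nat.even_add_one] using hn
    simp only [hn, this, if_true, if_false, LinearMap.sum_apply, LinearMap.sub_apply,
      LinearMap.id_apply, map_sum, mp_mp sh hsh]
    simp only [Finset.sum_sub_distrib, key, sub_self]

lemma hh_bd (sh : ZMod p → X →ₗ[ℝ] X) (hsh : ∀ a b x, sh a (sh b x) = sh (a + b) x) (v : ℕ → X)
    (n : ℕ) : bd (hh sh v (n + 1)) = DD sh n (hh sh v n) := by
  induction n with
  | zero =>
    change bd (cone (v 1) (DD sh 0 (hh sh v 0))) = _
    rw [bd_cone, DD_bd]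
    have : DD sh 0 (bd (hh sh v 0)) = 0 := by simp [hh, bd, bdL, DD, mp]
    rw [this]; simp
  | succ n ih =>
    change bd (cone (v (n + 2)) (DD sh (n + 1) (hh sh v (n + 1)))) = _
    rw [bd_cone, DD_bd, ih, DD_DD sh hsh]; simp

lemma hh_sub (sh : ZMod p → X →ₗ[ℝ] X) (hsh : ∀ a b x, sh a (sh b x) = sh (a + b) x)
    (hsh0 : ∀ x, sh 0 x = x) (v : ℕ → X) (n : ℕ) :
    hh sh v n ∈ Sub (fun l : List X => l.length = n + 1 ∧ ∃ γ : ℕ → ZMod p, ∀ x ∈ l,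
      ∃ i ≤ n, x = sh (γ i) (v i)) := by
  induction n with
  | zero =>
    refine single_mem_Sub ⟨by simp, fun _ => 0, ?_⟩
    intro x hx
    exact ⟨0, le_rfl, by simpa [hsh0] using hx⟩
  | succ n ih =>
    have h1 : ∀ h, mp (sh h) (hh sh v n) ∈ Sub (p := p) (fun l : List X => l.length = n + 1 ∧
        ∃ γ : ℕ → ZMod p, ∀ x ∈ l, ∃ i ≤ n, x = sh (γ i) (v i)) := by
      intro h
      refine mapSub (mp (sh h)) ?_ ih
      rintro l ⟨hl, γ, hγ⟩
      rw [mp, lin_single]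
      refine single_mem_Sub ⟨by simpa using hl, fun i => h + γ i, ?_⟩
      intro x hx
      obtain ⟨y, hy, rfl⟩ := List.mem_map.1 hx
      obtain ⟨i, hi, rfl⟩ := hγ y hy
      exact ⟨i, hi, by rw [hsh]⟩
    have h2 : DD sh n (hh sh v n) ∈ Sub (p := p) (fun l : List X => l.length = n + 1 ∧
        ∃ γ : ℕ → ZMod p, ∀ x ∈ l, ∃ i ≤ n, x = sh (γ i) (v i)) := by
      unfold DD
      split_ifs
      · exact Submodule.sub_mem _ (h1 1) ih
      · rw [LinearMap.sum_apply]
        exact Submodule.sum_mem _ (fun h _ => h1 h)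
    rw [hh]
    refine mapSub (cone _) ?_ h2
    rintro l ⟨hl, γ, hγ⟩
    rw [cone, lin_single]
    refine single_mem_Sub ⟨by simp [hl], fun i => if i = n + 1 then 0 else γ i, ?_⟩
    intro x hx
    rcases List.mem_cons.1 hx with rfl | hx
    · exact ⟨n + 1, le_rfl, by simp [hsh0]⟩
    · obtain ⟨i, hi, rfl⟩ := hγ x hx
      have hne : i ≠ n + 1 := by omega
      exact ⟨i, by omega, by simp [hne]⟩

theorem tucker (hp : 1 < p) (sh : ZMod p → X →ₗ[ℝ] X)
    (hsh : ∀ a b x, sh a (sh b x) = sh (a + b) x) (hsh0 : ∀ x, sh 0 x = x) (v : ℕ → X)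
    (N : ℕ) (Good : Set X)
    (hK : ∀ γ : ℕ → ZMod p, ∃ K, Convex ℝ K ∧ K ⊆ Good ∧ ∀ i ≤ N, sh (γ i) (v i) ∈ K)
    (B : ℝ) (hB : ∀ x ∈ Good, ∀ y ∈ Good, dist x y ≤ B)
    (lam : X → Lb p) (heq : ∀ x ∈ Good, ∀ h, lam (sh h x) = shL h (lam x))
    (hlt : ∀ x ∈ Good, (lam x).1 < N) (δ : ℝ) (hδ : 0 < δ)
    (hcons : ∀ x ∈ Good, ∀ y ∈ Good, dist x y ≤ δ → (lam x).1 = (lam y).1 → lam x = lam y) :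
    False := by
  obtain ⟨r, hr⟩ : ∃ r : ℕ, (1 - 1 / ((N + 1 : ℕ) : ℝ)) ^ r * B ≤ δ := by
    have h1 : (1 - 1 / ((N + 1 : ℕ) : ℝ)) < 1 := by
      have : (0 : ℝ) < 1 / ((N + 1 : ℕ) : ℝ) := by positivity
      linarith
    have h0 : 0 ≤ (1 - 1 / ((N + 1 : ℕ) : ℝ)) := by
      have : 1 / ((N + 1 : ℕ) : ℝ) ≤ 1 := by
        rw [div_le_one (by positivity)]; push_cast; linarith [(Nat.cast_nonneg N : (0 : ℝ) ≤ N)]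
      linarith
    have := (tendsto_pow_atTop_nhds_zero_of_lt_one h0 h1).mul_const B
    rw [zero_mul] at this
    exact ((this.eventually (gt_mem_nhds hδ)).exists).imp (fun _ h => h.le)
  set H : ℕ → Ch p X := fun n => (sdn (N + 1))^[r] (hh sh v n) with hH
  have Hsub : ∀ n ≤ N, H n ∈ Sub (fun l : List X => l.length = n + 1 ∧ (∀ x ∈ l, x ∈ Good) ∧
      ∀ x ∈ l, ∀ y ∈ l, dist x y ≤ δ) := by
    intro n hn
    have h0 : hh sh v n ∈ Sub (fun l : List X => l.length = n + 1 ∧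
        (∃ K, Convex ℝ K ∧ K ⊆ Good ∧ ∀ x ∈ l, x ∈ K) ∧ ∀ x ∈ l, ∀ y ∈ l, dist x y ≤ B) := by
      refine Sub_mono ?_ (hh_sub sh hsh hsh0 v n)
      rintro l ⟨hl, γ, hγ⟩
      obtain ⟨K, hK1, hK2, hK3⟩ := hK γ
      have : ∀ x ∈ l, x ∈ K := by
        intro x hx
        obtain ⟨i, hi, rfl⟩ := hγ x hx
        exact hK3 i (by omega)
      exact ⟨hl, ⟨K, hK1, hK2, this⟩, fun x hx y hy => hB x (hK2 (this x hx)) y (hK2 (this y hy))⟩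
    refine Sub_mono ?_ (sd_iter (N + 1) (by omega) Good B (n + 1) (by omega) _ h0 r)
    rintro l ⟨h1, ⟨K, -, h2, h3⟩, h4⟩
    exact ⟨h1, fun x hx => h2 (h3 x hx), fun x hx y hy => (h4 x hx y hy).trans hr⟩
  have Hbd : ∀ n, n + 1 ≤ N → bd (H (n + 1)) = DD sh n (H n) := by
    intro n hn
    have := (sd_iter_bd (N + 1) (hh sh v (n + 1)) (Sub_mono (fun l h => by
      have := h.1; omega) (hh_sub sh hsh hsh0 v (n + 1))) r).1
    simp only [hH]
    rw [this, hh_bd sh hsh, DD_sdn]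
  have H0 : H 0 = Finsupp.single [v 0] 1 := by
    have : sdn (N + 1) (Finsupp.single [v 0] 1 : Ch p X) = Finsupp.single [v 0] 1 := by
      rw [sdn_succ _ _ (by simp)]
      simp [bdL, sdn_nil, bary, cone]
    simp only [hH, hh]
    exact Function.iterate_fixed this r
  set Ph : Ch p X → RR p := fun c => al (srt (mp lam c)) with hPh
  set x : ℕ → RR p := fun n => Ph (H n) with hx
  have equi : ∀ n ≤ N, ∀ h, Ph (mp (sh h) (H n)) = shR h (x n) := by
    intro n hn h
    have e1 : mp lam (mp (sh h) (H n)) = mp (shL h) (mp lam (H n)) := by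
      refine lin_congr (mp lam ∘ₗ mp (sh h)) (mp (shL h) ∘ₗ mp lam) ?_ (Hsub n hn)
      rintro l ⟨-, hl, -⟩
      simp only [mp, LinearMap.comp_apply, lin_single, List.map_map]
      congr 1
      refine List.map_congr_left fun a ha => heq a (hl a ha) h
    have e2 : ∀ c : Ch p (Lb p), srt (mp (shL h) c) = mp (shL h) (srt c) :=
      lin_ext (srt ∘ₗ mp (shL h)) (mp (shL h) ∘ₗ srt) (fun l => by
        simpa [srt, mp] using (mp_srtL h l).symm)
    simp only [hPh, hx]
    rw [e1, e2, al_sh]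
  have step : ∀ n, n + 1 ≤ N → dR (x (n + 1)) = Ph (DD sh n (H n)) := by
    intro n hn
    have e : bd (srt (mp lam (H (n + 1)))) = srt (bd (mp lam (H (n + 1)))) := by
      refine lin_congr (bd ∘ₗ srt ∘ₗ mp lam) (srt ∘ₗ bd ∘ₗ mp lam) ?_ (Hsub (n + 1) hn)
      rintro l ⟨-, h1, h2⟩
      simp only [LinearMap.comp_apply, mp, lin_single, srt]
      have := srtL_bd (l.map lam) ?_
      · simpa [bd, srt] using this
      · intro a ha b hb hab
        obtain ⟨a', ha', rfl⟩ := List.mem_map.1 ha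
        obtain ⟨b', hb', rfl⟩ := List.mem_map.1 hb
        exact hcons a' (h1 a' ha') b' (h1 b' hb') (h2 a' ha' b' hb') hab
    simp only [hx, hPh]
    rw [al_bd hp, e, ← mp_bd, Hbd n hn]
  have stepE : ∀ n, n + 1 ≤ N → Even n → eps (x (n + 1)).1 = eps (x n).2 := by
    intro n hn he
    have h1 := step n hn
    have h2 : Ph (DD sh n (H n)) = shR 1 (x n) - x n := by
      rw [← equi n (by omega) 1]
      simp [hPh, hx, DD, he]
    rw [h2] at h1
    have h3 := congrArg Prod.snd h1
    have h4 : shf 1 ((x (n + 1)).1 - (x n).2) = (x (n + 1)).1 - (x n).2 := by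
      have : shf 1 (x (n + 1)).1 - (x (n + 1)).1 = shf 1 (x n).2 - (x n).2 := h3
      rw [map_sub, sub_eq_sub_iff_sub_eq_sub]
      exact this
    have h5 := eps_odd _ h4
    rwa [map_sub, sub_eq_zero] at h5
  have stepO : ∀ n, n + 1 ≤ N → ¬ Even n → eps (x (n + 1)).2 = eps (x n).1 := by
    intro n hn he
    have h1 := step n hn
    have h2 : Ph (DD sh n (H n)) = ∑ h, shR h (x n) := by
      simp_rw [← equi n (by omega)]
      simp [hPh, DD, he, LinearMap.sum_apply]
    rw [h2] at h1
    have h3 := congrFun (congrArg Prod.fst h1) 0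
    rw [Prod.fst_sum, Finset.sum_apply] at h3
    have h4 : eps (x (n + 1)).2 = ∑ h : ZMod p, (x n).1 (0 - h) := h3
    rw [h4]
    exact Equiv.sum_comp (Equiv.subLeft (0 : ZMod p)) (x n).1
  have main : ∀ n ≤ N, (Even n → eps (x n).2 = 1) ∧ (¬ Even n → eps (x n).1 = 1) := by
    intro n
    induction n with
    | zero =>
      intro _
      refine ⟨fun _ => ?_, fun h => by simp at h⟩
      have : x 0 = sR (lam (v 0)).2 (fun _ => 1, 0) := by
        simp only [hx, hPh, H0]
        simp [mp, srt, srtL, ins, insL, al, alL]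
      rw [this]
      change ∑ t, (if t = (lam (v 0)).2 then (1 : ZMod p) else 0) = 1
      simp
    | succ n ih =>
      intro hn
      have := ih (by omega)
      refine ⟨fun h => ?_, fun h => ?_⟩
      · have he : ¬ Even n := by simpa [Nat.even_add_one] using h
        rw [stepO n hn he, this.2 he]
      · have he : Even n := by simpa [Nat.even_add_one] using h
        rw [stepE n hn he, this.1 he]
  have xN : x N = 0 := by
    have : srt (mp lam (H N)) = 0 := by
      refine lin_congr (srt ∘ₗ mp lam) 0 ?_ (Hsub N le_rfl)
      rintro l ⟨h1, h2, -⟩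
      simp only [LinearMap.comp_apply, mp, lin_single, srt, LinearMap.zero_apply]
      refine srtL_zero N _ ?_ (by simp [h1])
      intro a ha
      obtain ⟨a', ha', rfl⟩ := List.mem_map.1 ha
      exact hlt a' (h2 a' ha')
    simp [hx, hPh, this]
  have : Fact (1 < p) := ⟨hp⟩
  have := main N le_rfl
  rw [xN] at this
  by_cases hN : Even N
  · exact absurd (this.1 hN) (by simp)
  · exact absurd (this.2 hN) (by simp)

end subdiv

end CE
namespace CE
section zero
variable {p : ℕ} [hp : Fact p.Prime] {d : ℕ}

/-- gap sets -/
def gap {ι : Type*} (η : ℝ) (z : ι → ℝ) (A : Finset ι) : Prop :=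
  ∀ a ∈ A, ∀ b, b ∉ A → z b + η < z a

lemma gap_unique {ι : Type*} [DecidableEq ι] (z : ι → ℝ) (A A' : Finset ι)
    (h : gap 0 z A) (h' : gap 0 z A') (hc : A.card = A'.card) : A = A' := by
  by_contra hne
  have h1 : ¬ A ⊆ A' := fun hs => hne (Finset.eq_of_subset_of_card_le hs hc.ge)
  have h2 : ¬ A' ⊆ A := fun hs => hne (Finset.eq_of_subset_of_card_le hs hc.le).symm
  obtain ⟨a, ha, ha'⟩ := Finset.not_subset.1 h1
  obtain ⟨b, hb, hb'⟩ := Finset.not_subset.1 h2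
  have e1 := h a ha b hb'
  have e2 := h' b hb a ha'
  linarith

lemma gap_exists {ι : Type*} [Fintype ι] [DecidableEq ι] (z : ι → ℝ) (η : ℝ) (hη : 0 < η)
    (j j' : ι) (hj : z j' + Fintype.card ι * η < z j) :
    ∃ A : Finset ι, 0 < A.card ∧ A.card < Fintype.card ι ∧ gap η z A := by
  by_contra hno
  push Not at hno
  set S : ℕ → Finset ι := fun n => Finset.univ.filter (fun l => z l ≤ z j' + n * η) with hS
  have key : ∀ n ≤ Fintype.card ι, n + 1 ≤ (S n).card := by
    intro n
    induction n with
    | zero =>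
      intro _
      have : j' ∈ S 0 := by simp [hS]
      have := Finset.card_pos.2 ⟨_, this⟩
      omega
    | succ n ih =>
      intro hn
      have h1 := ih (by omega)
      have hjn : j ∉ S n := by
        simp only [hS, Finset.mem_filter, Finset.mem_univ, true_and, not_le]
        have : (n : ℝ) ≤ Fintype.card ι := by exact_mod_cast (by omega)
        nlinarith
      have h2 := hno (S n)ᶜ (Finset.card_pos.2 ⟨j, by simpa using hjn⟩) (by
        rw [Finset.card_compl]
        have := Finset.card_le_univ (S n)
        omega)
      unfold gap at h2
      push Not at h2
      obtain ⟨a, ha, b, hb, hab⟩ := h2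
      have hb' : b ∈ S n := by simpa using hb
      have ha' : a ∉ S n := by simpa using ha
      have hsub : S n ⊆ S (n + 1) := by
        intro l hl
        simp only [hS, Finset.mem_filter, Finset.mem_univ, true_and] at hl ⊢
        push_cast
        nlinarith
      have haS : a ∈ S (n + 1) := by
        simp only [hS, Finset.mem_filter, Finset.mem_univ, true_and] at hb' ⊢
        push_cast
        nlinarith
      have : S n ⊂ S (n + 1) := (Finset.ssubset_iff_of_subset hsub).2 ⟨a, haS, ha'⟩
      have := Finset.card_lt_card this
      omega
  have h1 := key _ le_rfl
  have h2 := Finset.card_le_univ (S (Fintype.card ι))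
  omega

abbrev XX (p d : ℕ) := ZMod p → Fin (d + 1) → ℝ

noncomputable def shX (h : ZMod p) : XX p d →ₗ[ℝ] XX p d :=
  LinearMap.funLeft ℝ _ (fun j => j - h)

lemma shX_apply (h : ZMod p) (x : XX p d) (j : ZMod p) : shX h x j = x (j - h) := rfl

def Good (p d : ℕ) [Fact p.Prime] : Set (XX p d) :=
  {x | (∀ j c, 0 ≤ x j c) ∧ (∑ j, ∑ c, x j c = 1) ∧ ∀ c, ∃ j, x j c = 0}

lemma Good_le {x : XX p d} (hx : x ∈ Good p d) (j c) : x j c ≤ 1 := by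
  obtain ⟨h0, h1, -⟩ := hx
  calc x j c ≤ ∑ c, x j c := Finset.single_le_sum (fun c _ => h0 j c) (Finset.mem_univ c)
    _ ≤ ∑ j, ∑ c, x j c := Finset.single_le_sum (f := fun j => ∑ c, x j c)
        (fun j _ => Finset.sum_nonneg (fun c _ => h0 j c)) (Finset.mem_univ j)
    _ = 1 := h1

lemma Good_compact : IsCompact (Good p d) := by
  refine Metric.isCompact_of_isClosed_isBounded ?_ ?_
  · have : Good p d = (⋂ j, ⋂ c, {x : XX p d | 0 ≤ x j c}) ∩ {x | ∑ j, ∑ c, x j c = 1} ∩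
        ⋂ c, ⋃ j, {x : XX p d | x j c = 0} := by
      ext x; simp [Good, and_assoc]
    rw [this]
    refine IsClosed.inter (IsClosed.inter ?_ ?_) ?_
    · exact isClosed_iInter fun j => isClosed_iInter fun c =>
        isClosed_le continuous_const (by fun_prop)
    · exact isClosed_eq (by fun_prop) continuous_const
    · refine isClosed_iInter fun c => isClosed_iUnion_of_finite fun j =>
        isClosed_eq (by fun_prop) continuous_const
  · refine (Metric.isBounded_Icc (0 : XX p d) 1).subset ?_
    intro x hx
    exact ⟨fun j c => hx.1 j c, fun j c => Good_le hx j c⟩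

lemma Good_sh {x : XX p d} (hx : x ∈ Good p d) (h : ZMod p) : shX h x ∈ Good p d := by
  obtain ⟨h0, h1, h2⟩ := hx
  refine ⟨fun j c => h0 _ c, ?_, fun c => ?_⟩
  · rw [← h1]
    exact Equiv.sum_comp (Equiv.subRight h) (fun j => ∑ c, x j c)
  · obtain ⟨j, hj⟩ := h2 c
    exact ⟨j + h, by simpa [shX_apply] using hj⟩

noncomputable def vv (p d : ℕ) (i : ℕ) : XX p d :=
  fun j c => if j = 0 ∧ (c : ℕ) = i / (p - 1) then 1 else 0

lemma Good_K (γ : ℕ → ZMod p) : ∃ K, Convex ℝ K ∧ K ⊆ Good p d ∧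
    ∀ i ≤ d * (p - 1), shX (γ i) (vv p d i) ∈ K := by
  have hp2 := hp.out.two_le
  have : ∀ c : ℕ, ∃ s : ZMod p, ∀ i, i / (p - 1) = c → s ≠ γ i := by
    intro c
    by_contra hno
    push Not at hno
    have : (Finset.univ : Finset (ZMod p)) ⊆
        (Finset.range (p - 1)).image (fun t => γ (c * (p - 1) + t)) := by
      intro s _
      obtain ⟨i, hi, rfl⟩ := hno s
      refine Finset.mem_image.2 ⟨i % (p - 1), Finset.mem_range.2 (Nat.mod_lt _ (by omega)), ?_⟩
      rw [← hi]
      congr 1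
      exact Nat.div_add_mod' i (p - 1)
    have h1 := Finset.card_le_card this
    have h2 := h1.trans Finset.card_image_le
    rw [Finset.card_univ, ZMod.card, Finset.card_range] at h2
    omega
  choose s hs using this
  refine ⟨{x | (∀ j c, 0 ≤ x j c) ∧ (∑ j, ∑ c, x j c = 1) ∧ ∀ c : Fin (d + 1), x (s c) c = 0}, ?_, ?_, ?_⟩
  · rintro x ⟨hx1, hx2, hx3⟩ y ⟨hy1, hy2, hy3⟩ a b ha hb hab
    refine ⟨fun j c => ?_, ?_, fun c => ?_⟩
    · have := hx1 j c
      have := hy1 j c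
      simp only [Pi.add_apply, Pi.smul_apply, smul_eq_mul]
      positivity
    · simp only [Pi.add_apply, Pi.smul_apply, smul_eq_mul, Finset.sum_add_distrib,
        ← Finset.mul_sum, hx2, hy2]
      linarith
    · simp [hx3, hy3]
  · rintro x ⟨hx1, hx2, hx3⟩
    exact ⟨hx1, hx2, fun c => ⟨s c, hx3 c⟩⟩
  · intro i hi
    have hc : i / (p - 1) < d + 1 := by
      rw [Nat.div_lt_iff_lt_mul (by omega)]
      have : (d + 1) * (p - 1) = d * (p - 1) + (p - 1) := by ring
      omega
    refine ⟨fun j c => ?_, ?_, fun c => ?_⟩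
    · rw [shX_apply, vv]; split_ifs <;> norm_num
    · have h1 : ∀ j : ZMod p, ∑ c : Fin (d + 1), shX (γ i) (vv p d i) j c =
          if j = γ i then (1 : ℝ) else 0 := by
        intro j
        simp only [shX_apply, vv, sub_eq_zero]
        by_cases hj : j = γ i
        · simp only [hj, true_and, if_true]
          rw [Finset.sum_eq_single (⟨i / (p - 1), hc⟩ : Fin (d + 1))]
          · simp
          · intro b _ hb
            rw [if_neg]
            intro h
            exact hb (Fin.ext h)
          · simp
        · simp [hj]
      simp [h1]
    · rw [shX_apply, vv, if_neg]
      rintro ⟨h1, h2⟩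
      exact hs c i h2.symm (sub_eq_zero.1 h1)

theorem approx_zero (M : XX p d → Fin d → ZMod p → ℝ) (hM : Continuous M)
    (hMs : ∀ h x i j, M (shX h x) i j = M x i (j - h)) (ε : ℝ) (hε : 0 < ε) :
    ∃ x ∈ Good p d, ∀ i j j', M x i j ≤ M x i j' + ε := by
  classical
  by_contra hno
  push Not at hno
  have hp2 := hp.out.two_le
  set η : ℝ := ε / p with hηd
  have hp0 : (0 : ℝ) < p := by exact_mod_cast hp.out.pos
  have hη : 0 < η := by positivity
  have hηp : (p : ℝ) * η = ε := by rw [hηd]; field_simp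
  let R : XX p d → Fin d × ℕ → Finset (ZMod p) → Prop := fun x q A =>
    0 < A.card ∧ A.card < p ∧ A.card = q.2 ∧ gap η (M x q.1) A
  have hRsh : ∀ x q A h, R x q A → R (shX h x) q (A.map (Equiv.addRight h).toEmbedding) := by
    rintro x q A h ⟨h1, h2, h3, h4⟩
    refine ⟨by simpa using h1, by simpa using h2, by simpa using h3, ?_⟩
    intro a ha b hb
    rw [hMs, hMs]
    refine h4 _ ?_ _ ?_
    · obtain ⟨a', ha', rfl⟩ := Finset.mem_map.1 ha
      simpa using ha'
    · intro hb'
      exact hb (Finset.mem_map.2 ⟨b - h, hb', by simp⟩)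
  let Q : XX p d → Fin d × ℕ → Prop := fun x q => ∃ A, R x q A
  have hQsh1 : ∀ x q h, Q x q → Q (shX h x) q := fun x q h ⟨A, hA⟩ => ⟨_, hRsh x q A h hA⟩
  have hQsh : ∀ x h, Q (shX h x) = Q x := by
    intro x h
    funext q
    refine propext ⟨fun hq => ?_, hQsh1 x q h⟩
    have := hQsh1 _ q (-h) hq
    have e : shX (-h) (shX h x) = x := by
      funext j; rw [shX_apply, shX_apply]; congr 1; ring
    rwa [e] at this
  have hQex : ∀ x ∈ Good p d, ∃ q, Q x q := by
    intro x hx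
    obtain ⟨i, j, j', h⟩ := hno x hx
    obtain ⟨A, h1, h2, h3⟩ := gap_exists (M x i) η hη j j' (by
      rw [ZMod.card, hηp]; exact h)
    rw [ZMod.card] at h2
    exact ⟨(i, A.card), A, h1, h2, rfl, h3⟩
  have hne : Nonempty (Fin d × ℕ) := by
    obtain ⟨K, -, hK, hv⟩ := Good_K (d := d) (fun _ => (0 : ZMod p))
    obtain ⟨q, -⟩ := hQex _ (hK (hv 0 (Nat.zero_le _)))
    exact ⟨q⟩
  let qq : XX p d → Fin d × ℕ := fun x => Classical.epsilon (Q x)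
  let AA : XX p d → Finset (ZMod p) := fun x => Classical.epsilon (R x (qq x))
  have hqq : ∀ x ∈ Good p d, Q x (qq x) := fun x hx => Classical.epsilon_spec (hQex x hx)
  have hAA : ∀ x ∈ Good p d, R x (qq x) (AA x) := fun x hx => Classical.epsilon_spec (hqq x hx)
  have hqsh : ∀ x h, qq (shX h x) = qq x := fun x h => by simp only [qq, hQsh]
  have gap0 : ∀ (z : ZMod p → ℝ) A, gap η z A → gap 0 z A := fun z A h a ha b hb => by
    have := h a ha b hb; linarith
  have hAsh : ∀ x ∈ Good p d, ∀ h, AA (shX h x) = (AA x).map (Equiv.addRight h).toEmbedding := by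
    intro x hx h
    have h1 := hAA _ (Good_sh hx h)
    have h2 := hRsh x _ _ h (hAA x hx)
    rw [hqsh] at h1
    exact gap_unique _ _ _ (gap0 _ _ h1.2.2.2) (gap0 _ _ h2.2.2.2) (h1.2.2.1.trans h2.2.2.1.symm)
  let lam : XX p d → Lb p := fun x => (((qq x).1 : ℕ) * (p - 1) + ((qq x).2 - 1),
    (∑ a ∈ AA x, a) / ((qq x).2 : ZMod p))
  have hq2 : ∀ x ∈ Good p d, 0 < (qq x).2 ∧ (qq x).2 < p := by
    intro x hx
    have := hAA x hx
    exact ⟨this.2.2.1 ▸ this.1, this.2.2.1 ▸ this.2.1⟩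
  obtain ⟨δ, hδ, hδM⟩ := Metric.uniformContinuousOn_iff_le.1
    (Good_compact.uniformContinuousOn_of_continuous hM.continuousOn) (η / 2) (by positivity)
  refine tucker (p := p) hp.out.one_lt shX ?_ ?_ (vv p d) (d * (p - 1)) (Good p d) Good_K 1 ?_ lam
    ?_ ?_ δ hδ ?_
  · intro a b x
    funext j; rw [shX_apply, shX_apply, shX_apply]; congr 1; ring
  · intro x
    funext j; rw [shX_apply, sub_zero]
  · intro x hx y hy
    rw [dist_pi_le_iff zero_le_one]
    intro j
    rw [dist_pi_le_iff zero_le_one]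
    intro c
    rw [Real.dist_eq, abs_le]
    have := hx.1 j c
    have := hy.1 j c
    have := Good_le hx j c
    have := Good_le hy j c
    constructor <;> linarith
  · intro x hx h
    have hs := hq2 x hx
    have hs0 : ((qq x).2 : ZMod p) ≠ 0 := by
      intro h0
      rw [ZMod.natCast_eq_zero_iff] at h0
      have := Nat.le_of_dvd hs.1 h0
      omega
    have hcard := (hAA x hx).2.2.1
    simp only [lam, hqsh, hAsh x hx, shL, Finset.sum_map]
    refine Prod.ext rfl ?_
    simp only [Equiv.coe_toEmbedding, Equiv.coe_addRight, Finset.sum_add_distrib, Finset.sum_const,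
      hcard, nsmul_eq_mul]
    field_simp
    try ring
  · intro x hx
    have hs := hq2 x hx
    have h1 := (qq x).1.isLt
    simp only [lam]
    have : ((qq x).1 : ℕ) * (p - 1) + (p - 1) ≤ d * (p - 1) := by
      rw [← Nat.succ_mul]; exact Nat.mul_le_mul_right _ h1
    omega
  · intro x hx y hy hxy heq
    have hsx := hq2 x hx
    have hsy := hq2 y hy
    simp only [lam] at heq
    have hp1 : 0 < p - 1 := by omega
    have hlx : (qq x).2 - 1 < p - 1 := by omega
    have hly : (qq y).2 - 1 < p - 1 := by omega
    have e1 : ((qq x).1 : ℕ) = (qq y).1 := by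
      have := congrArg (· / (p - 1)) heq
      simpa [Nat.add_div_of_dvd_right, Nat.mul_div_cancel _ hp1, Nat.div_eq_of_lt hlx,
        Nat.div_eq_of_lt hly] using this
    have e2 : (qq x).2 = (qq y).2 := by
      rw [e1] at heq; omega
    have e3 : qq x = qq y := Prod.ext (Fin.ext e1) e2
    have hA : AA x = AA y := by
      have h1 := hAA x hx
      have h2 := hAA y hy
      refine gap_unique (M y (qq y).1) _ _ ?_ (gap0 _ _ h2.2.2.2)
        (h1.2.2.1.trans (e2.trans h2.2.2.1.symm))
      intro a ha b hb
      have h3 := h1.2.2.2 a ha b hb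
      rw [e3] at h3
      have h4 := hδM x hx y hy hxy
      have h5 : ∀ j, |M x (qq y).1 j - M y (qq y).1 j| ≤ η / 2 := fun j => by
        rw [← Real.dist_eq]
        exact ((dist_le_pi_dist _ _ j).trans (dist_le_pi_dist _ _ (qq y).1)).trans h4
      have h6 := abs_le.1 (h5 a)
      have h7 := abs_le.1 (h5 b)
      linarith
    simp only [lam, e3, hA]

end zero
end CE
namespace CE
section meas
open Filter Topology
variable {p : ℕ} [hp : Fact p.Prime] {d : ℕ}

noncomputable def aff (g : Fin (d + 1) → ℝ) (x : EuclideanSpace ℝ (Fin d)) : ℝ :=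
  (∑ i : Fin d, g i.succ * x i) + g 0

lemma aff_cont : Continuous (fun q : (Fin (d + 1) → ℝ) × EuclideanSpace ℝ (Fin d) =>
    aff q.1 q.2) := by
  unfold aff; fun_prop

lemma aff_cont_l (x : EuclideanSpace ℝ (Fin d)) : Continuous (fun g => aff g x) :=
  aff_cont.comp (by fun_prop : Continuous fun g : Fin (d + 1) → ℝ => (g, x))

lemma aff_cont_r (g : Fin (d + 1) → ℝ) : Continuous (aff g) :=
  aff_cont.comp (by fun_prop : Continuous fun x : EuclideanSpace ℝ (Fin d) => (g, x))

lemma aff_sub (g g' : Fin (d + 1) → ℝ) (x) : aff (g - g') x = aff g x - aff g' x := by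
  simp only [aff, Pi.sub_apply, sub_mul, Finset.sum_sub_distrib]; ring

lemma aff_comb (g : Fin (d + 1) → ℝ) (x y : EuclideanSpace ℝ (Fin d)) (a b : ℝ) (h : a + b = 1) :
    aff g (a • x + b • y) = a * aff g x + b * aff g y := by
  have hb : b = 1 - a := by linarith
  subst hb
  simp only [aff, PiLp.add_apply, PiLp.smul_apply, smul_eq_mul, mul_add, Finset.mul_sum,
    Finset.sum_add_distrib]
  have e1 : ∀ i : Fin d, g i.succ * (a * x i) = a * (g i.succ * x i) := fun i => by ring
  have e2 : ∀ i : Fin d, g i.succ * ((1 - a) * y i) = (1 - a) * (g i.succ * y i) := fun i => by ring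
  simp only [e1, e2]
  ring

lemma aff_vadd (g : Fin (d + 1) → ℝ) (x y z : EuclideanSpace ℝ (Fin d)) (c : ℝ) :
    aff g (c • (x - y) + z) = c * (aff g x - aff g y) + aff g z := by
  simp only [aff, PiLp.add_apply, PiLp.smul_apply, PiLp.sub_apply, smul_eq_mul, mul_add, mul_sub,
    Finset.mul_sum, Finset.sum_add_distrib, Finset.sum_sub_distrib]
  have e1 : ∀ (w : EuclideanSpace ℝ (Fin d)) (i : Fin d),
    g i.succ * (c * w i) = c * (g i.succ * w i) := fun w i => by ring
  simp only [e1]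
  ring

lemma hyper_null (g g' : Fin (d + 1) → ℝ) (h : g ≠ g') :
    volume {x : EuclideanSpace ℝ (Fin d) | aff g x = aff g' x} = 0 := by
  let S : AffineSubspace ℝ (EuclideanSpace ℝ (Fin d)) :=
    { carrier := {x | aff (g - g') x = 0}
      smul_vsub_vadd_mem' := by
        intro c x y z hx hy hz
        simp only [Set.mem_setOf_eq] at hx hy hz ⊢
        rw [vsub_eq_sub, vadd_eq_add, aff_vadd, hx, hy, hz]; ring }
  have hS : S ≠ ⊤ := by
    intro hS
    have hall : ∀ x, aff (g - g') x = 0 := by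
      intro x
      have : x ∈ S := by rw [hS]; exact AffineSubspace.mem_top ℝ _ x
      exact this
    have h0 : (g - g') 0 = 0 := by simpa [aff] using hall 0
    apply h
    rw [← sub_eq_zero]
    funext c
    refine Fin.cases h0 (fun i => ?_) c
    have := hall (EuclideanSpace.single i 1)
    simp only [aff, h0, add_zero] at this
    rw [Finset.sum_eq_single i] at this
    · simpa using this
    · intro b _ hb
      simp [hb]
    · simp
  have := Measure.addHaar_affineSubspace (volume : Measure (EuclideanSpace ℝ (Fin d))) S hS
  have e : {x : EuclideanSpace ℝ (Fin d) | aff g x = aff g' x} = (S : Set _) := by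
    ext x
    change _ ↔ aff (g - g') x = 0
    rw [aff_sub, sub_eq_zero]; rfl
  rw [e]; exact this

def RR' (f : XX p d) (v : Fin (d + 1) → ℝ) : Set (EuclideanSpace ℝ (Fin d)) :=
  {x | ∀ l, aff (f l) x ≤ aff v x}

lemma RR'_closed (f : XX p d) (v) : IsClosed (RR' f v) := by
  have : RR' f v = ⋂ l, {x | aff (f l) x ≤ aff v x} := by ext; simp [RR']
  rw [this]
  exact isClosed_iInter fun l => isClosed_le (aff_cont_r _) (aff_cont_r _)

lemma RR'_convex (f : XX p d) (v) : Convex ℝ (RR' f v) := by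
  intro x hx y hy a b ha hb hab l
  rw [aff_comb _ _ _ _ _ hab, aff_comb _ _ _ _ _ hab]
  have := hx l
  have := hy l
  gcongr

noncomputable def sm (t : ZMod p → ℝ) (j : ZMod p) : ℝ := Real.exp (t j) / ∑ l, Real.exp (t l)

lemma sm_den (t : ZMod p → ℝ) : 0 < ∑ l, Real.exp (t l) :=
  Finset.sum_pos (fun _ _ => Real.exp_pos _) ⟨0, Finset.mem_univ _⟩

lemma sm_nonneg (t : ZMod p → ℝ) (j) : 0 ≤ sm t j :=
  div_nonneg (Real.exp_pos _).le (sm_den t).le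

lemma sm_sum (t : ZMod p → ℝ) : ∑ j, sm t j = 1 := by
  simp only [sm, ← Finset.sum_div]
  exact div_self (sm_den t).ne'

lemma sm_le_one (t : ZMod p → ℝ) (j) : sm t j ≤ 1 := by
  rw [← sm_sum t]
  exact Finset.single_le_sum (fun j _ => sm_nonneg t j) (Finset.mem_univ j)

lemma sm_le (t : ZMod p → ℝ) (a b) : sm t a ≤ Real.exp (t a - t b) := by
  rw [Real.exp_sub, sm]
  exact div_le_div_of_nonneg_left (Real.exp_pos _).le (Real.exp_pos _)
    (Finset.single_le_sum (f := fun l => Real.exp (t l)) (fun l _ => (Real.exp_pos _).le)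
      (Finset.mem_univ b))

lemma sm_cont (j : ZMod p) : Continuous (fun t => sm t j) := by
  unfold sm
  exact Continuous.div (by fun_prop) (by fun_prop) (fun t => (sm_den t).ne')

noncomputable def MM (μ : Fin d → Measure (EuclideanSpace ℝ (Fin d))) (n : ℝ) (f : XX p d)
    (i : Fin d) (j : ZMod p) : ℝ := ∫ x, sm (fun l => n * aff (f l) x) j ∂(μ i)

lemma sm_aff_cont_x (n : ℝ) (f : XX p d) (j) :
    Continuous (fun x => sm (fun l => n * aff (f l) x) j) :=
  (sm_cont j).comp (continuous_pi fun l => continuous_const.mul (aff_cont_r _))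

lemma sm_aff_cont_f (n : ℝ) (x) (j) :
    Continuous (fun f : XX p d => sm (fun l => n * aff (f l) x) j) :=
  (sm_cont j).comp (continuous_pi fun l => continuous_const.mul
    ((aff_cont_l x).comp (continuous_apply l)))

variable (μ : Fin d → Measure (EuclideanSpace ℝ (Fin d))) [hprob : ∀ i, IsProbabilityMeasure (μ i)]

lemma sm_int (n : ℝ) (f : XX p d) (i j) :
    Integrable (fun x => sm (fun l => n * aff (f l) x) j) (μ i) := by
  refine Integrable.of_bound (sm_aff_cont_x n f j).aestronglyMeasurable 1 (Eventually.of_forall ?_)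
  intro x
  rw [Real.norm_eq_abs, abs_of_nonneg (sm_nonneg _ _)]
  exact sm_le_one _ _

lemma MM_cont (n : ℝ) : Continuous (MM (p := p) μ n) := by
  refine continuous_pi fun i => continuous_pi fun j => ?_
  refine continuous_of_dominated (bound := fun _ => 1) ?_ ?_ (integrable_const _) ?_
  · exact fun f => (sm_aff_cont_x n f j).aestronglyMeasurable
  · intro f
    refine Eventually.of_forall fun x => ?_
    rw [Real.norm_eq_abs, abs_of_nonneg (sm_nonneg _ _)]
    exact sm_le_one _ _
  · exact Eventually.of_forall fun x => sm_aff_cont_f n x j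

lemma MM_sh (n : ℝ) (h : ZMod p) (f : XX p d) (i j) :
    MM μ n (shX h f) i j = MM μ n f i (j - h) := by
  unfold MM
  congr 1
  funext x
  unfold sm
  congr 1
  exact Equiv.sum_comp (Equiv.subRight h) (fun l => Real.exp (n * aff (f l) x))

lemma MM_sum (n : ℝ) (f : XX p d) (i) : ∑ j, MM μ n f i j = 1 := by
  unfold MM
  rw [← integral_finsetSum _ (fun j _ => sm_int μ n f i j)]
  simp [sm_sum]

lemma near (z : ZMod p → ℝ) (hz : ∑ j, z j = 1) (ε : ℝ) (h : ∀ j j', z j ≤ z j' + ε) (j) :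
    |z j - 1 / p| ≤ ε := by
  have hp0 : (0 : ℝ) < p := by exact_mod_cast hp.out.pos
  have h1 : p * z j ≤ 1 + p * ε := by
    have : ∑ l : ZMod p, z j ≤ ∑ l, (z l + ε) := Finset.sum_le_sum fun l _ => h j l
    simpa [Finset.sum_add_distrib, hz, ZMod.card] using this
  have h2 : 1 ≤ p * z j + p * ε := by
    have : ∑ l, z l ≤ ∑ l : ZMod p, (z j + ε) := Finset.sum_le_sum fun l _ => h l j
    simpa [Finset.sum_add_distrib, hz, ZMod.card] using this
  have e : z j - 1 / p = (p * z j - 1) / p := by field_simp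
  rw [e, abs_le, le_div_iff₀ hp0, div_le_iff₀ hp0]
  constructor <;> linarith

lemma sm_tendsto (c : ℕ → ℝ) (hc : Tendsto c atTop atTop) (u : ℕ → XX p d) (f : XX p d)
    (hu : Tendsto u atTop (𝓝 f)) (x) (a b : ZMod p) (hab : aff (f a) x < aff (f b) x) :
    Tendsto (fun n => sm (fun l => c n * aff (u n l) x) a) atTop (𝓝 0) := by
  have h1 : ∀ l, Tendsto (fun n => aff (u n l) x) atTop (𝓝 (aff (f l) x)) := fun l =>
    ((aff_cont_l x).tendsto _).comp (((continuous_apply l).tendsto f).comp hu)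
  have h2 : Tendsto (fun n => c n * (aff (u n a) x - aff (u n b) x)) atTop atBot :=
    hc.atTop_mul_neg (sub_neg.2 hab) ((h1 a).sub (h1 b))
  refine squeeze_zero (fun n => sm_nonneg _ _) (fun n => ?_) (Real.tendsto_exp_atBot.comp h2)
  refine (sm_le _ a b).trans (le_of_eq ?_)
  simp only [Function.comp]
  congr 1; ring

open Classical in
theorem prime_step (hac : ∀ i, μ i ≪ volume) : ∃ f : XX p d, (∀ j, ∃ l, f l ≠ f j) ∧
    ∀ i j, (μ i).real (RR' f (f j)) = ((Finset.univ.filter (fun l => f l = f j)).card : ℝ) / p := by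
  have hex : ∀ n : ℕ, ∃ x ∈ Good p d, ∀ i j j', MM μ n x i j ≤ MM μ n x i j' + 1 / ((n : ℝ) + 1) :=
    fun n => approx_zero (MM μ n) (MM_cont μ n) (MM_sh μ n) _ (by positivity)
  choose u hu hu2 using hex
  obtain ⟨f, hf, φ, hφ, hlim⟩ := Good_compact.tendsto_subseq hu
  refine ⟨f, ?_, ?_⟩
  · intro j
    by_contra hno
    push Not at hno
    obtain ⟨-, h1, h2⟩ := hf
    have : ∀ l c, f l c = 0 := by
      intro l c
      obtain ⟨t, ht⟩ := h2 c
      rw [hno l, ← hno t]; exact ht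
    simp [this] at h1
  · intro i j
    set B := Finset.univ.filter (fun l => f l = f j) with hB
    have hmem : ∀ l, l ∈ B ↔ f l = f j := by simp [hB]
    have hc : Tendsto (fun n => ((φ n : ℕ) : ℝ)) atTop atTop :=
      tendsto_natCast_atTop_atTop.comp hφ.tendsto_atTop
    have T1 : Tendsto (fun n => ∑ l ∈ B, MM μ (φ n : ℕ) (u (φ n)) i l) atTop
        (𝓝 (∑ l ∈ B, 1 / (p : ℝ))) := by
      refine tendsto_finsetSum _ fun l _ => ?_
      have h0 : Tendsto (fun n => 1 / (((φ n : ℕ) : ℝ) + 1)) atTop (𝓝 0) :=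
        tendsto_one_div_add_atTop_nhds_zero_nat.comp hφ.tendsto_atTop
      rw [tendsto_iff_norm_sub_tendsto_zero]
      refine squeeze_zero (fun n => norm_nonneg _) (fun n => ?_) h0
      exact near _ (MM_sum μ _ _ i) _ (fun a b => hu2 (φ n) i a b) l
    have T2 : Tendsto (fun n => ∫ x, ∑ l ∈ B, sm (fun l => ((φ n : ℕ) : ℝ) * aff (u (φ n) l) x) l
        ∂(μ i)) atTop (𝓝 (∫ x, (RR' f (f j)).indicator (fun _ => (1 : ℝ)) x ∂(μ i))) := by
      refine tendsto_integral_of_dominated_convergence (fun _ => 1) ?_ (integrable_const _) ?_ ?_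
      · intro n
        exact (continuous_finsetSum _ fun l _ => sm_aff_cont_x _ _ l).aestronglyMeasurable
      · intro n
        refine Eventually.of_forall fun x => ?_
        rw [Real.norm_eq_abs, abs_of_nonneg (Finset.sum_nonneg fun l _ => sm_nonneg _ _)]
        rw [← sm_sum (fun l => ((φ n : ℕ) : ℝ) * aff (u (φ n) l) x)]
        exact Finset.sum_le_sum_of_subset_of_nonneg (Finset.subset_univ _)
          (fun l _ _ => sm_nonneg _ _)
      · have hae : ∀ᵐ x ∂(μ i), ∀ l, f l ≠ f j → aff (f l) x ≠ aff (f j) x := by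
          rw [ae_all_iff]
          intro l
          by_cases hl : f l = f j
          · simp [hl]
          · have := hac i (hyper_null _ _ hl)
            filter_upwards [measure_eq_zero_iff_ae_notMem.1 this] with x hx _ using hx
        filter_upwards [hae] with x hx
        by_cases hxR : x ∈ RR' f (f j)
        · rw [Set.indicator_of_mem hxR]
          have hz : Tendsto (fun n => ∑ l ∈ Bᶜ, sm (fun l => ((φ n : ℕ) : ℝ) * aff (u (φ n) l) x) l)
              atTop (𝓝 (∑ l ∈ Bᶜ, 0)) := by
            refine tendsto_finsetSum _ fun l hl => ?_
            have hl' : f l ≠ f j := fun h => (Finset.mem_compl.1 hl) ((hmem l).2 h)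
            exact sm_tendsto _ hc _ f hlim x l j (lt_of_le_of_ne (hxR l) (hx l hl'))
          have := hz.const_sub 1
          rw [Finset.sum_const_zero, sub_zero] at this
          refine this.congr fun n => ?_
          rw [← sm_sum (fun l => ((φ n : ℕ) : ℝ) * aff (u (φ n) l) x),
            ← Finset.sum_add_sum_compl B, add_sub_cancel_right]
        · rw [Set.indicator_of_notMem hxR]
          have : ∃ b, aff (f j) x < aff (f b) x := by simpa [RR'] using hxR
          obtain ⟨b, hb⟩ := this
          rw [← Finset.sum_const_zero (s := B)]
          refine tendsto_finsetSum _ fun l hl => ?_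
          exact sm_tendsto _ hc _ f hlim x l b (by rw [(hmem l).1 hl]; exact hb)
    have e : ∀ n, ∫ x, ∑ l ∈ B, sm (fun l => ((φ n : ℕ) : ℝ) * aff (u (φ n) l) x) l ∂(μ i) =
        ∑ l ∈ B, MM μ (φ n : ℕ) (u (φ n)) i l := fun n =>
      integral_finsetSum _ (fun l _ => sm_int μ _ _ i l)
    simp only [e] at T2
    have := tendsto_nhds_unique T2 T1
    rw [integral_indicator_const _ (RR'_closed f (f j)).measurableSet] at this
    simpa [div_eq_mul_inv] using this

end meas
end CE
namespace CE
open ProbabilityTheory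

def Conc (d k : ℕ) : Prop := ∀ (μ : Fin d → Measure (EuclideanSpace ℝ (Fin d))),
    (∀ i, IsProbabilityMeasure (μ i)) → (∀ i, μ i ≪ volume) →
    ∃ C : Fin k → Set (EuclideanSpace ℝ (Fin d)), (∀ j, IsClosed (C j)) ∧ (∀ j, Convex ℝ (C j)) ∧
      (⋃ j, C j) = Set.univ ∧
      (∀ j j', j ≠ j' → Disjoint (interior (C j)) (interior (C j'))) ∧
      ∀ i j, μ i (C j) = 1 / (k : ENNReal)

open Classical in
lemma main_step (d k : ℕ) (hk : 2 ≤ k) (ih : ∀ k', 0 < k' → k' < k → Conc d k') : Conc d k := by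
  intro μ hprob hac
  set p := k.minFac with hpd
  have hpp : p.Prime := Nat.minFac_prime (by omega)
  have : Fact p.Prime := ⟨hpp⟩
  obtain ⟨m, hm⟩ : p ∣ k := Nat.minFac_dvd k
  have hm0 : 0 < m := Nat.pos_of_ne_zero (by rintro rfl; simp at hm; omega)
  obtain ⟨f, hf1, hf2⟩ := prime_step (p := p) μ hac
  let n : (Fin (d + 1) → ℝ) → ℕ := fun v => (Finset.univ.filter (fun l => f l = v)).card
  let V : Finset (Fin (d + 1) → ℝ) := Finset.univ.image f
  have hV : ∀ v : V, ∃ j, f j = v := fun v => by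
    obtain ⟨j, -, hj⟩ := Finset.mem_image.1 v.2
    exact ⟨j, hj⟩
  have hnpos : ∀ v : V, 0 < n v := fun v => by
    obtain ⟨j, hj⟩ := hV v
    exact Finset.card_pos.2 ⟨j, by simpa using hj⟩
  have hnlt : ∀ v : V, n v < p := fun v => by
    obtain ⟨j, hj⟩ := hV v
    obtain ⟨l, hl⟩ := hf1 j
    have : (Finset.univ.filter (fun l => f l = v)) ⊂ (Finset.univ : Finset (ZMod p)) := by
      rw [Finset.ssubset_univ_iff]
      intro h
      have := Finset.mem_univ l
      rw [← h, Finset.mem_filter, ← hj] at this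
      exact hl this.2
    have := Finset.card_lt_card this
    rwa [Finset.card_univ, ZMod.card] at this
  have hnsum : ∑ v : V, n v = p := by
    have := Finset.card_eq_sum_card_image f (Finset.univ : Finset (ZMod p))
    rw [Finset.card_univ, ZMod.card] at this
    conv_rhs => rw [this]
    exact Finset.sum_coe_sort V n
  have hp0 : (0 : ℝ) < p := by exact_mod_cast hpp.pos
  have hR : ∀ i (v : V), (μ i).real (RR' f v) = (n v : ℝ) / p := fun i v => by
    obtain ⟨j, hj⟩ := hV v
    have := hf2 i j
    rw [hj] at this
    exact this
  have hRne : ∀ i (v : V), μ i (RR' f v) ≠ 0 := fun i v h => by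
    have h1 := hR i v
    rw [Measure.real, h, ENNReal.toReal_zero] at h1
    have : (0 : ℝ) < n v := by exact_mod_cast hnpos v
    have : (0 : ℝ) < n v / p := div_pos this hp0
    linarith
  have hC : ∀ v : V, ∃ C : Fin (n v * m) → Set (EuclideanSpace ℝ (Fin d)),
      (∀ j, IsClosed (C j)) ∧ (∀ j, Convex ℝ (C j)) ∧ (⋃ j, C j) = Set.univ ∧
      (∀ j j', j ≠ j' → Disjoint (interior (C j)) (interior (C j'))) ∧
      ∀ i j, cond (μ i) (RR' f v) (C j) = 1 / ((n v * m : ℕ) : ENNReal) := by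
    intro v
    refine ih (n v * m) (Nat.mul_pos (hnpos v) hm0) ?_ (fun i => cond (μ i) (RR' f v)) ?_ ?_
    · rw [hm]; exact Nat.mul_lt_mul_of_pos_right (hnlt v) hm0
    · exact fun i => cond_isProbabilityMeasure (hRne i v)
    · exact fun i => cond_absolutelyContinuous.trans (hac i)
  choose C hC1 hC2 hC3 hC4 hC5 using hC
  have hcard : Fintype.card (Σ v : V, Fin (n v * m)) = k := by
    simp only [Fintype.card_sigma, Fintype.card_fin]
    rw [← Finset.sum_mul, hnsum, ← hm]
  let e : Fin k ≃ (Σ v : V, Fin (n v * m)) := (Fintype.equivFinOfCardEq hcard).symm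
  let D : (Σ v : V, Fin (n v * m)) → Set (EuclideanSpace ℝ (Fin d)) :=
    fun q => RR' f q.1 ∩ C q.1 q.2
  refine ⟨fun j => D (e j), fun j => (RR'_closed f _).inter (hC1 _ _),
    fun j => (RR'_convex f _).inter (hC2 _ _), ?_, ?_, ?_⟩
  · rw [Set.eq_univ_iff_forall]
    intro x
    obtain ⟨j, hj⟩ := Finite.exists_max (fun l => aff (f l) x)
    let v : V := ⟨f j, by simp [V]⟩
    have hx : x ∈ ⋃ t, C v t := by rw [hC3]; trivial
    obtain ⟨t, ht⟩ := Set.mem_iUnion.1 hx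
    refine Set.mem_iUnion.2 ⟨e.symm ⟨v, t⟩, ?_⟩
    simp only [Equiv.apply_symm_apply]
    exact ⟨hj, ht⟩
  · intro j j' hjj
    have hee : e j ≠ e j' := fun h => hjj (e.injective h)
    change Disjoint (interior (D (e j))) (interior (D (e j')))
    generalize e j = q at hee
    generalize e j' = q' at hee
    obtain ⟨v, t⟩ := q
    obtain ⟨v', t'⟩ := q'
    by_cases hv : v = v'
    · subst hv
      have htt : t ≠ t' := fun h => hee (by rw [h])
      exact (hC4 v t t' htt).mono (interior_mono Set.inter_subset_right)
        (interior_mono Set.inter_subset_right)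
    · rw [Set.disjoint_iff_inter_eq_empty]
      have ho : IsOpen (interior (D ⟨v, t⟩) ∩ interior (D ⟨v', t'⟩)) :=
        isOpen_interior.inter isOpen_interior
      refine ho.eq_empty_of_measure_zero (μ := volume) ?_
      have hne : (v : Fin (d + 1) → ℝ) ≠ v' := fun h => hv (Subtype.ext h)
      refine measure_mono_null ?_ (hyper_null _ _ hne)
      rintro x ⟨h1, h2⟩
      have h1 := (interior_subset h1).1
      have h2 := (interior_subset h2).1
      obtain ⟨j, hj⟩ := hV v
      obtain ⟨j', hj'⟩ := hV v'
      have a1 := h1 j'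
      have a2 := h2 j
      rw [hj'] at a1
      rw [hj] at a2
      exact le_antisymm a2 a1
  · intro i j
    change μ i (D (e j)) = _
    obtain ⟨v, t⟩ := e j
    have h1 := hC5 v i t
    rw [cond_apply (RR'_closed f v).measurableSet] at h1
    have h2 : (μ i) (D ⟨v, t⟩) = μ i (RR' f v) * (1 / ((n v * m : ℕ) : ENNReal)) := by
      rw [← h1, ← mul_assoc, ENNReal.mul_inv_cancel (hRne i v) (measure_ne_top _ _), one_mul]
    have hn0 : (0 : ℝ) < n v := by exact_mod_cast hnpos v
    have hm0' : (0 : ℝ) < m := by exact_mod_cast hm0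
    have hk0 : (k : ENNReal) ≠ 0 := by exact_mod_cast (by omega : k ≠ 0)
    rw [← ENNReal.toReal_eq_toReal_iff' (measure_ne_top _ _) (by simp [hk0]), h2,
      ENNReal.toReal_mul]
    have := hR i v
    rw [Measure.real] at this
    rw [this, hm]
    simp only [one_div, ENNReal.toReal_inv, ENNReal.toReal_natCast]
    push_cast
    field_simp

theorem main (d k : ℕ) (hk : 0 < k) : Conc d k := by
  induction k using Nat.strong_induction_on with
  | _ k ih =>
    by_cases h1 : k = 1
    · subst h1
      intro μ hprob hac
      exact ⟨fun _ => Set.univ, fun _ => isClosed_univ, fun _ => convex_univ, Set.iUnion_const _,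
        fun j j' h => absurd (Subsingleton.elim j j') h, fun i j => by simp⟩
    · exact main_step d k (by omega) (fun k' h0 h => ih k' h h0)

end CE
/-- Equipartition of `d` measures in `ℝ^d` into `k` convex parts. -/
theorem convex_equipartition (k d : ℕ) (hk : 0 < k) (hd : 0 < d)
    (μ : Fin d → Measure (EuclideanSpace ℝ (Fin d)))
    (hprob : ∀ i, IsProbabilityMeasure (μ i))
    (hac : ∀ i, μ i ≪ volume) :
    ∃ C : Fin k → Set (EuclideanSpace ℝ (Fin d)),
      (∀ j, IsClosed (C j)) ∧ (∀ j, Convex ℝ (C j)) ∧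
      (⋃ j, C j) = Set.univ ∧
      (∀ j j', j ≠ j' → Disjoint (interior (C j)) (interior (C j'))) ∧
      ∀ i j, μ i (C j) = 1 / k := by
  exact CE.main d k hk μ hprob hac
end

section
/- Let d ≥ 2, n ≥ 2, k ≥ 2, and c ≥ d be integers with m = n(c − d) + d. Then for every m finite measures μ₁, …, μ_m on ℝ^d, each positive and absolutely continuous with respect to the Lebesgue measure, there exists a convex partition of ℝ^d into n parts (C₁, …, C_n) such that each part C_j satisfies μ_i(C_j) > 0 for at least c of the indices i ∈ {1, …, m}. -/
open MeasureTheory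

lemma aux_order {ι : Type*} [DecidableEq ι] (r : ι → ℝ) (b : ℕ) : ∀ (a : ℕ) (S : Finset ι),
    S.card ≤ a + b + 1 →
    ∃ t : ℝ, (S.filter (fun i => r i < t)).card ≤ a ∧ (S.filter (fun i => t < r i)).card ≤ b := by
  intro a
  induction a with
  | zero =>
    intro S hS
    rcases S.eq_empty_or_nonempty with rfl | hne
    · exact ⟨0, by simp⟩
    obtain ⟨i0, hi0, hmin⟩ := S.exists_min_image r hne
    refine ⟨r i0, ?_, ?_⟩
    · rw [Finset.filter_false_of_mem]
      · simp
      · intro i hi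
        exact not_lt.2 (hmin i hi)
    · have h1 : S.filter (fun i => r i0 < r i) ⊆ S.erase i0 := by
        intro i hi
        rw [Finset.mem_filter] at hi
        refine Finset.mem_erase.2 ⟨?_, hi.1⟩
        rintro rfl
        exact lt_irrefl _ hi.2
      have h2 := Finset.card_le_card h1
      rw [Finset.card_erase_of_mem hi0] at h2
      omega
  | succ a ih =>
    intro S hS
    rcases S.eq_empty_or_nonempty with rfl | hne
    · exact ⟨0, by simp⟩
    obtain ⟨i0, hi0, hmin⟩ := S.exists_min_image r hne
    obtain ⟨t, h1, h2⟩ := ih (S.erase i0) (by rw [Finset.card_erase_of_mem hi0]; omega)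
    refine ⟨max t (r i0), ?_, ?_⟩
    · have h3 : S.filter (fun i => r i < max t (r i0)) ⊆
          insert i0 ((S.erase i0).filter (fun i => r i < t)) := by
        intro i hi
        rw [Finset.mem_filter, lt_max_iff] at hi
        have := hmin i hi.1
        rw [Finset.mem_insert, Finset.mem_filter, Finset.mem_erase]
        by_cases h : i = i0
        · exact Or.inl h
        · refine Or.inr ⟨⟨h, hi.1⟩, ?_⟩
          rcases hi.2 with h | h
          · exact h
          · linarith
      have := Finset.card_le_card h3
      have := Finset.card_insert_le i0 ((S.erase i0).filter (fun i => r i < t))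
      omega
    · refine le_trans (Finset.card_le_card ?_) h2
      intro i hi
      rw [Finset.mem_filter, max_lt_iff] at hi
      rw [Finset.mem_filter, Finset.mem_erase]
      refine ⟨⟨?_, hi.1⟩, hi.2.1⟩
      rintro rfl
      exact lt_irrefl _ hi.2.2

lemma aux_key {ι : Type*} [DecidableEq ι] (d : ℕ) :
    ∀ (E : Type) [NormedAddCommGroup E] [InnerProductSpace ℝ E] [FiniteDimensional ℝ E],
    Module.finrank ℝ E = d + 2 → ∀ (v : ι → E) (e : E) (S : Finset ι),
    (∀ i ∈ S, 0 < inner ℝ e (v i)) → ∀ a b : ℕ, S.card ≤ a + b + (d + 1) →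
    ∃ f : E, f ≠ 0 ∧ (S.filter (fun i => inner ℝ f (v i) < 0)).card ≤ a ∧
      (S.filter (fun i => 0 < inner ℝ f (v i))).card ≤ b := by
  induction d with
  | zero =>
    intro E _ _ _ hE v e S hS a b hcard
    have hlt : Module.finrank ℝ (Submodule.span ℝ {e}) < Module.finrank ℝ E := by
      have := finrank_span_le_card (R := ℝ) ({e} : Set E)
      simp at this
      omega
    obtain ⟨h, hh⟩ : ∃ h : E, h ∉ Submodule.span ℝ {e} := by
      by_contra! hcon
      have : Submodule.span ℝ {e} = ⊤ := by
        rw [eq_top_iff]; intro x _; exact hcon x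
      rw [this, finrank_top] at hlt
      exact lt_irrefl _ hlt
    obtain ⟨t, h1, h2⟩ := aux_order (fun i => inner ℝ h (v i) / inner ℝ e (v i)) b a S
      (by omega)
    refine ⟨h - t • e, ?_, ?_, ?_⟩
    · intro h0
      apply hh
      rw [sub_eq_zero.1 h0]
      exact Submodule.smul_mem _ _ (Submodule.mem_span_singleton_self e)
    · refine le_trans (Finset.card_le_card ?_) h1
      intro i hi
      rw [Finset.mem_filter, inner_sub_left, real_inner_smul_left] at hi
      rw [Finset.mem_filter, div_lt_iff₀ (hS i hi.1)]
      exact ⟨hi.1, by linarith [hi.2]⟩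
    · refine le_trans (Finset.card_le_card ?_) h2
      intro i hi
      rw [Finset.mem_filter, inner_sub_left, real_inner_smul_left] at hi
      rw [Finset.mem_filter, lt_div_iff₀ (hS i hi.1)]
      exact ⟨hi.1, by linarith [hi.2]⟩
  | succ d ih =>
    intro E _ _ _ hE v e S hS a b hcard
    rcases S.eq_empty_or_nonempty with rfl | hne
    · have : Nontrivial E := Module.nontrivial_of_finrank_pos (R := ℝ) (by omega)
      obtain ⟨f, hf⟩ := exists_ne (0 : E)
      exact ⟨f, hf, by simp⟩
    obtain ⟨i0, hi0, hmax⟩ := S.exists_max_image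
      (fun i => ‖(inner ℝ e (v i))⁻¹ • v i‖) hne
    have hs0 := hS i0 hi0
    set w0 : E := (inner ℝ e (v i0))⁻¹ • v i0 with hw0
    have hv0 : v i0 ≠ 0 := by
      intro h; rw [h] at hs0; simp at hs0
    have hvw0 : v i0 = (inner ℝ e (v i0)) • w0 := by
      rw [hw0, smul_smul, mul_inv_cancel₀ hs0.ne', one_smul]
    haveI : Fact (Module.finrank ℝ E = (d + 2) + 1) := ⟨by omega⟩
    let K : Submodule ℝ E := (Submodule.span ℝ {v i0})ᗮ
    have hK : Module.finrank ℝ K = d + 2 := Submodule.finrank_orthogonal_span_singleton hv0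
    let P := K.orthogonalProjectionOnto
    have hP : ∀ (g : K) (x : E), inner ℝ g (P x) = inner ℝ (g : E) x := by
      intro g x
      exact Submodule.inner_orthogonalProjectionOnto_eq_of_mem_left g x
    have hP0 : ∀ c : ℝ, P (c • v i0) = 0 := by
      intro c
      rw [Submodule.orthogonalProjectionOnto_eq_zero_iff]
      exact Submodule.le_orthogonal_orthogonal _
        (Submodule.smul_mem _ _ (Submodule.mem_span_singleton_self _))
    have hew0 : inner ℝ e w0 = 1 := by
      rw [hw0, real_inner_smul_right, inv_mul_cancel₀ hs0.ne']
    let g : E := ‖w0‖ ^ 2 • e - w0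
    have hg : g ∈ K := by
      rw [Submodule.mem_orthogonal_singleton_iff_inner_left]
      rw [hvw0, real_inner_smul_right, inner_sub_left, real_inner_smul_left, hew0,
        real_inner_self_eq_norm_sq]
      ring
    classical
    let S' := S.filter (fun i => P (v i) ≠ 0)
    have hS' : ∀ i ∈ S', 0 < inner ℝ (⟨g, hg⟩ : K) (P (v i)) := by
      intro i hi
      obtain ⟨hi, hPi⟩ := Finset.mem_filter.1 hi
      rw [hP]
      have hs := hS i hi
      have hm := hmax i hi
      set w : E := (inner ℝ e (v i))⁻¹ • v i with hw
      have hvw : v i = (inner ℝ e (v i)) • w := by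
        rw [hw, smul_smul, mul_inv_cancel₀ hs.ne', one_smul]
      have hew : inner ℝ e w = 1 := by
        rw [hw, real_inner_smul_right, inv_mul_cancel₀ hs.ne']
      have hne : w0 - w ≠ 0 := by
        intro h0
        apply hPi
        rw [hvw, ← sub_eq_zero.1 h0, hw0, smul_smul]
        exact hP0 _
      have hpos : 0 < ‖w0 - w‖ ^ 2 := by positivity
      rw [norm_sub_sq_real] at hpos
      have hsq : ‖w‖ ^ 2 ≤ ‖w0‖ ^ 2 := by gcongr
      have : inner ℝ g w = ‖w0‖ ^ 2 - inner ℝ w0 w := by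
        rw [inner_sub_left, real_inner_smul_left, hew, mul_one]
      change 0 < inner ℝ g (v i)
      rw [hvw, real_inner_smul_right, this]
      apply mul_pos hs
      linarith
    have hcard' : S'.card ≤ a + b + (d + 1) := by
      have h1 : S' ⊆ S.erase i0 := by
        intro i hi
        obtain ⟨hi, hPi⟩ := Finset.mem_filter.1 hi
        refine Finset.mem_erase.2 ⟨?_, hi⟩
        rintro rfl
        apply hPi
        simpa using hP0 1
      have h2 := Finset.card_le_card h1
      rw [Finset.card_erase_of_mem hi0] at h2
      omega
    obtain ⟨f, hf, h1, h2⟩ := ih K hK (fun i => P (v i)) ⟨g, hg⟩ S' hS' a b hcard'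
    refine ⟨f, by simpa using hf, le_trans (Finset.card_le_card ?_) h1,
      le_trans (Finset.card_le_card ?_) h2⟩
    · intro i hi
      rw [Finset.mem_filter, ← hP] at hi
      refine Finset.mem_filter.2 ⟨Finset.mem_filter.2 ⟨hi.1, ?_⟩, hi.2⟩
      intro h; rw [h] at hi; simp at hi
    · intro i hi
      rw [Finset.mem_filter, ← hP] at hi
      refine Finset.mem_filter.2 ⟨Finset.mem_filter.2 ⟨hi.1, ?_⟩, hi.2⟩
      intro h; rw [h] at hi; simp at hi

lemma aux_density {d : ℕ} (μ : Measure (EuclideanSpace ℝ (Fin d))) [IsFiniteMeasure μ]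
    (hpos : 0 < μ Set.univ) (hac : μ ≪ volume) :
    ∃ x : EuclideanSpace ℝ (Fin d), ∀ u : EuclideanSpace ℝ (Fin d), ∀ s : ℝ,
      inner ℝ u x + s ≤ 0 → 0 < μ {y | inner ℝ u y + s ≤ 0} := by
  set ρ := μ.rnDeriv volume
  have hρm : Measurable ρ := Measure.measurable_rnDeriv _ _
  have hρ : (volume : Measure (EuclideanSpace ℝ (Fin d))).withDensity ρ = μ :=
    Measure.withDensity_rnDeriv_eq _ _ hac
  set A : Set (EuclideanSpace ℝ (Fin d)) := {x | ρ x ≠ 0}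
  have hz : ∀ s, μ s = 0 → volume (A ∩ s) = 0 := by
    intro s hs
    rw [← hρ, withDensity_apply_eq_zero hρm] at hs
    exact hs
  have hA : volume A ≠ 0 := by
    intro h
    have : μ Set.univ = 0 := by
      rw [← hρ, withDensity_apply_eq_zero hρm, Set.inter_univ]
      exact h
    exact hpos.ne' this
  have hae := Besicovitch.ae_tendsto_measure_inter_div
    (volume : Measure (EuclideanSpace ℝ (Fin d))) A
  haveI : (ae ((volume : Measure (EuclideanSpace ℝ (Fin d))).restrict A)).NeBot := by
    rw [ae_neBot]
    intro h
    exact hA (Measure.restrict_eq_zero.1 h)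
  obtain ⟨x, hx⟩ := hae.exists
  refine ⟨x, fun u s hus => ?_⟩
  by_contra hcon
  have h0 : μ {y | inner ℝ u y + s ≤ 0} = 0 := by simpa using hcon
  have hv := hz _ h0
  have hev := (hx.eventually (lt_mem_nhds (show (2 : ENNReal)⁻¹ < 1 by
    exact ENNReal.inv_lt_one.2 (by norm_num)))).and self_mem_nhdsWithin
  obtain ⟨r, hr, hr0⟩ := hev.exists
  have hr0 : 0 < r := hr0
  set B := Metric.closedBall x r
  set H : Set (EuclideanSpace ℝ (Fin d)) := {y | inner ℝ u y + s ≤ 0}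
  have hHm : MeasurableSet H := by
    apply IsClosed.measurableSet
    exact isClosed_le (by fun_prop) (by fun_prop)
  have hB0 : volume B ≠ 0 := (Metric.measure_closedBall_pos _ _ hr0).ne'
  have hBt : volume B ≠ ⊤ := measure_closedBall_lt_top.ne
  have h1 : volume (A ∩ B) ≤ volume (B \ H) := by
    calc volume (A ∩ B) ≤ volume ((A ∩ H) ∪ (B \ H)) := by
          apply measure_mono
          rintro y ⟨hyA, hyB⟩
          by_cases hyH : y ∈ H
          · exact Or.inl ⟨hyA, hyH⟩
          · exact Or.inr ⟨hyB, hyH⟩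
      _ ≤ volume (A ∩ H) + volume (B \ H) := measure_union_le _ _
      _ = volume (B \ H) := by rw [hv, zero_add]
  have h2 : volume (B \ H) ≤ volume (B ∩ H) := by
    have hmp : MeasurePreserving (fun y : EuclideanSpace ℝ (Fin d) => (x + x) - y) volume volume :=
      Measure.measurePreserving_sub_left volume (x + x)
    have hBH : MeasurableSet (B ∩ H) := Metric.isClosed_closedBall.measurableSet.inter hHm
    rw [← hmp.measure_preimage hBH.nullMeasurableSet]
    apply measure_mono
    rintro y ⟨hyB, hyH⟩
    refine ⟨?_, ?_⟩
    · rw [mem_closedBall_iff_norm] at hyB ⊢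
      rw [← norm_neg]
      have : -(x + x - y - x) = y - x := by abel
      rw [this]
      exact hyB
    · have : 0 < inner ℝ u y + s := by simpa [H] using hyH
      change inner ℝ u ((x + x) - y) + s ≤ 0
      rw [inner_sub_right, inner_add_right]
      linarith
  have h3 : volume (B ∩ H) + volume (B \ H) = volume B := measure_inter_add_diff B hHm
  have h4 : volume (A ∩ B) / volume B ≤ 2⁻¹ := by
    rw [ENNReal.div_le_iff hB0 hBt, ← ENNReal.mul_le_iff_le_inv (by norm_num) (by norm_num), two_mul]
    rw [← h3]
    exact add_le_add (h1.trans h2) h1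
  exact absurd hr (not_lt.2 h4)

lemma aux_interior {d : ℕ} (u : EuclideanSpace ℝ (Fin d)) (s : ℝ) (hu : u ≠ 0) :
    Disjoint (interior {y : EuclideanSpace ℝ (Fin d) | inner ℝ u y + s ≤ 0})
      (interior {y : EuclideanSpace ℝ (Fin d) | 0 ≤ inner ℝ u y + s}) := by
  rw [Set.disjoint_left]
  intro x hx hy
  have hy1 := interior_subset hy
  have hy0 : 0 ≤ inner ℝ u x + s := hy1
  have hc : Filter.Tendsto (fun t : ℝ => x + t • u) (nhdsWithin 0 (Set.Ioi 0)) (nhds x) := by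
    have : Continuous (fun t : ℝ => x + t • u) := by fun_prop
    have h := this.tendsto 0
    simp only [zero_smul, add_zero] at h
    exact h.mono_left nhdsWithin_le_nhds
  have hev := (hc.eventually (mem_interior_iff_mem_nhds.1 hx)).and self_mem_nhdsWithin
  obtain ⟨t, ht, ht0⟩ := hev.exists
  have ht0 : 0 < t := ht0
  have ht : inner ℝ u (x + t • u) + s ≤ 0 := ht
  rw [inner_add_right, real_inner_smul_right, real_inner_self_eq_norm_sq] at ht
  have : 0 < t * ‖u‖ ^ 2 := by positivity
  linarith

lemma aux_cut {d : ℕ} {ι : Type*} [DecidableEq ι] (hd : 2 ≤ d)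
    (x : ι → EuclideanSpace ℝ (Fin d)) (S : Finset ι) (a b : ℕ) (hS : S.card = a + b + d) :
    ∃ (u : EuclideanSpace ℝ (Fin d)) (s : ℝ), u ≠ 0 ∧
      b + d ≤ (S.filter (fun i => 0 ≤ inner ℝ u (x i) + s)).card ∧
      a + d ≤ (S.filter (fun i => inner ℝ u (x i) + s ≤ 0)).card := by
  obtain ⟨d, rfl⟩ : ∃ d', d = d' + 1 := ⟨d - 1, by omega⟩
  obtain ⟨f, hf, h1, h2⟩ := aux_key (ι := ι) d (WithLp 2 (EuclideanSpace ℝ (Fin (d + 1)) × ℝ))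
    (by
      rw [(WithLp.linearEquiv 2 ℝ (EuclideanSpace ℝ (Fin (d + 1)) × ℝ)).finrank_eq]
      simp) (fun i => WithLp.toLp 2 (x i, 1)) (WithLp.toLp 2 (0, 1)) S
    (by intro i _; simp [WithLp.prod_inner_apply]) a b (by omega)
  have hin : ∀ i, inner ℝ f (WithLp.toLp 2 (x i, (1 : ℝ))) = inner ℝ f.fst (x i) + f.snd := by
    intro i
    simp [WithLp.prod_inner_apply]
  simp only [hin] at h1 h2
  have e1 := Finset.card_filter_add_card_filter_not (s := S)
    (fun i => inner ℝ f.fst (x i) + f.snd < 0)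
  have e2 := Finset.card_filter_add_card_filter_not (s := S)
    (fun i => 0 < inner ℝ f.fst (x i) + f.snd)
  simp only [not_lt] at e1 e2
  refine ⟨f.fst, f.snd, ?_, by omega, by omega⟩
  intro hu
  simp only [hu, inner_zero_left, zero_add] at h1 h2 
  rcases lt_trichotomy f.snd 0 with h | h | h
  · simp [h] at h1
    omega
  · apply hf
    apply WithLp.ofLp_injective
    exact Prod.ext hu h
  · simp [h] at h2
    omega

lemma aux_main {d c : ℕ} {ι : Type*} [DecidableEq ι] (hd : 2 ≤ d) (hc : d ≤ c) (n : ℕ)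
    (hn : 1 ≤ n) : ∀ (S : Finset ι) (μ : ι → Measure (EuclideanSpace ℝ (Fin d))),
    (∀ i, IsFiniteMeasure (μ i)) → (∀ i ∈ S, 0 < μ i Set.univ) → (∀ i, μ i ≪ volume) →
    n * (c - d) + d ≤ S.card →
    ∃ C : Fin n → Set (EuclideanSpace ℝ (Fin d)),
      (∀ j, IsClosed (C j)) ∧ (∀ j, Convex ℝ (C j)) ∧
      (⋃ j, C j) = Set.univ ∧
      (∀ j j', j ≠ j' → Disjoint (interior (C j)) (interior (C j'))) ∧
      ∀ j, ∃ T : Finset ι, c ≤ T.card ∧ ∀ i ∈ T, 0 < μ i (C j) := by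
  induction n, hn using Nat.le_induction with
  | base =>
    intro S μ _ hpos _ hcard
    refine ⟨fun _ => Set.univ, fun _ => isClosed_univ, fun _ => convex_univ, Set.iUnion_const _, ?_, ?_⟩
    · intro j j' h
      exact absurd (Subsingleton.elim j j') h
    · intro j
      exact ⟨S, by omega, hpos⟩
  | succ n hn ih =>
    intro S μ hfin hpos hac hcard
    have hx : ∀ i, ∃ x : EuclideanSpace ℝ (Fin d), i ∈ S →
        ∀ u : EuclideanSpace ℝ (Fin d), ∀ s : ℝ,
        inner ℝ u x + s ≤ 0 → 0 < μ i {y | inner ℝ u y + s ≤ 0} := by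
      intro i
      by_cases hi : i ∈ S
      · haveI := hfin i
        obtain ⟨x, hx⟩ := aux_density (μ i) (hpos i hi) (hac i)
        exact ⟨x, fun _ => hx⟩
      · exact ⟨0, fun h => absurd h hi⟩
    choose x hx using hx
    rw [add_mul, one_mul] at hcard
    obtain ⟨u, s, hu, h1, h2⟩ := aux_cut hd x S (c - d) (S.card - c) (by omega)
    set A : Set (EuclideanSpace ℝ (Fin d)) := {y | inner ℝ u y + s ≤ 0} with hA
    set B : Set (EuclideanSpace ℝ (Fin d)) := {y | 0 ≤ inner ℝ u y + s} with hB
    have hAc : IsClosed A := isClosed_le (by fun_prop) (by fun_prop)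
    have hBc : IsClosed B := isClosed_le (by fun_prop) (by fun_prop)
    have hAv : Convex ℝ A := by
      intro y hy z hz p q hp hq hpq
      simp only [hA, Set.mem_setOf_eq] at *
      rw [inner_add_right, real_inner_smul_right, real_inner_smul_right]
      have : s = p * s + q * s := by rw [← add_mul, hpq, one_mul]
      nlinarith [mul_nonneg hp (neg_nonneg.2 hy), mul_nonneg hq (neg_nonneg.2 hz)]
    have hBv : Convex ℝ B := by
      intro y hy z hz p q hp hq hpq
      simp only [hB, Set.mem_setOf_eq] at *
      rw [inner_add_right, real_inner_smul_right, real_inner_smul_right]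
      have : s = p * s + q * s := by rw [← add_mul, hpq, one_mul]
      nlinarith [mul_nonneg hp hy, mul_nonneg hq hz]
    have hdis : Disjoint (interior A) (interior B) := aux_interior u s hu
    obtain ⟨C, hC1, hC2, hC3, hC4, hC5⟩ := ih (S.filter (fun i => 0 ≤ inner ℝ u (x i) + s))
      (fun i => (μ i).restrict B) (fun i => by haveI := hfin i; infer_instance)
      (by
        intro i hi
        obtain ⟨hi, hi'⟩ := Finset.mem_filter.1 hi
        rw [Measure.restrict_apply_univ]
        have := hx i hi (-u) (-s) (by rw [inner_neg_left]; linarith)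
        convert this using 2
        ext y
        simp only [hB, Set.mem_setOf_eq, inner_neg_left]
        constructor <;> intro h <;> linarith)
      (fun i => Measure.restrict_le_self.absolutelyContinuous.trans (hac i))
      (by omega)
    refine ⟨Fin.cons A (fun j => C j ∩ B), ?_, ?_, ?_, ?_, ?_⟩
    · intro j
      refine Fin.cases ?_ (fun j => ?_) j
      · exact hAc
      · exact (hC1 j).inter hBc
    · intro j
      refine Fin.cases ?_ (fun j => ?_) j
      · exact hAv
      · exact (hC2 j).inter hBv
    · rw [Set.eq_univ_iff_forall]
      intro y
      rw [Set.mem_iUnion]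
      rcases le_total (inner ℝ u y + s) 0 with h | h
      · exact ⟨0, h⟩
      · have : y ∈ ⋃ j, C j := by rw [hC3]; trivial
        obtain ⟨j, hj⟩ := Set.mem_iUnion.1 this
        exact ⟨j.succ, hj, h⟩
    · intro j j'
      refine Fin.cases ?_ (fun j => ?_) j <;> refine Fin.cases ?_ (fun j' => ?_) j'
      · intro h; exact absurd rfl h
      · intro _
        exact hdis.mono_right (interior_mono Set.inter_subset_right)
      · intro _
        exact hdis.symm.mono_left (interior_mono Set.inter_subset_right)
      · intro h
        exact (hC4 j j' (fun h' => h (by rw [h']))).mono (interior_mono Set.inter_subset_left)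
          (interior_mono Set.inter_subset_left)
    · intro j
      refine Fin.cases ?_ (fun j => ?_) j
      · refine ⟨_, le_trans (by omega) h2, fun i hi => ?_⟩
        obtain ⟨hi, hi'⟩ := Finset.mem_filter.1 hi
        exact hx i hi u s hi'
      · obtain ⟨T, hT, hT'⟩ := hC5 j
        refine ⟨T, hT, fun i hi => ?_⟩
        have := hT' i hi
        rw [Measure.restrict_apply' hBc.measurableSet] at this
        exact this

/-- Blagojević–Palić–Soberón–Ziegler: convex partitions where each part sees
at least `c` of the `m = n(c-d) + d` measures. -/
theorem convex_partition_positive_measures (d n k c : ℕ)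
    (hd : 2 ≤ d) (hn : 2 ≤ n) (hk : 2 ≤ k) (hc : d ≤ c)
    (μ : Fin (n * (c - d) + d) → Measure (EuclideanSpace ℝ (Fin d)))
    (hfin : ∀ i, IsFiniteMeasure (μ i))
    (hpos : ∀ i, 0 < μ i Set.univ)
    (hac : ∀ i, μ i ≪ volume) :
    ∃ C : Fin n → Set (EuclideanSpace ℝ (Fin d)),
      (∀ j, IsClosed (C j)) ∧ (∀ j, Convex ℝ (C j)) ∧
      (⋃ j, C j) = Set.univ ∧
      (∀ j j', j ≠ j' → Disjoint (interior (C j)) (interior (C j'))) ∧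
      ∀ j, c ≤ {i | 0 < μ i (C j)}.ncard := by
  obtain ⟨C, h1, h2, h3, h4, h5⟩ := aux_main hd hc n (by omega) Finset.univ μ hfin
    (fun i _ => hpos i) hac (by simp)
  refine ⟨C, h1, h2, h3, h4, fun j => ?_⟩
  obtain ⟨T, hT, hT'⟩ := h5 j
  refine hT.trans ?_
  rw [← Set.ncard_coe_finset]
  exact Set.ncard_le_ncard (fun i hi => hT' i hi) (Set.toFinite _)
end
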